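/- arXiv:1902.03278 — 6 statements merged into one kernel-verified Lean document; each statement's English description precedes it below -/
import Mathlib

section
/- Suppose that for every V ∈ C(X) the limit Q(V) = lim_{k→∞} (1/k)·log (𝔓_k^V 𝟙)(x) exists uniformly in x ∈ X and does not depend on x. Then Q is a convex, 1-Lipschitz function on C(X) satisfying Q(V + c) = Q(V) + c for every V ∈ C(X) and every constant c ∈ ℝ, and its Legendre transform I satisfies, for every Borel probability measure λ on X, I(λ) = sup_g ∫_X log(g / 𝔓₁ g) dλ, where the supremum is taken over all strictly positive functions g ∈ C(X). -/
/-!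
Put `T h (x) = log ∫ exp (h y) P(x, dy)`, a nonlinear operator on `C(X)`. It is monotone, commutes
with adding constants and is convex (as `exp` is). With `u₀ = 0` and `u_{k+1} = T (V + u_k)`,
the function `(𝔓_k^V 𝟙)` is `exp u_k`, so `u_k / k → Q V` uniformly.

* Convexity of `T` gives, by induction, convexity of `V ↦ u_k`, hence of `Q`. Monotonicity and
  translation equivariance show that `V ≤ W + c` implies `Q V ≤ Q W + c`, which contains both the
  Lipschitz bound and `Q (V + c) = Q V + c`.
* Writing `g = exp h`, the right-hand side of the variational formula is `sup_h ∫ (h - T h) dλ`.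
  - For `h ∈ C(X)` let `V = h - T h`. Then `T h` is a fixed point of `u ↦ T (V + u)`, so `u_k`
    stays within `‖T h‖` of it; hence `Q V = 0` and `∫ (h - T h) dλ = ⟨V, λ⟩ - Q V`.
  - For `V ∈ C(X)` let `w = (u₀ + ⋯ + u_{k-1}) / k` and `h = V + w`. By convexity
    `T h ≤ (u₁ + ⋯ + u_k) / k = w + u_k / k`, so `h - T h ≥ V - u_k / k`, which is at least
    `V - Q V - ε` for large `k`.
-/


open MeasureTheory Filter Topology

/-- The Feynman–Kac operator `𝔓₁^V` associated with a transition kernel `P` and a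
potential `V`: `(𝔓₁^V f)(x) = ∫ e^{V(y)} f(y) P(x,dy)`.  The semigroup `𝔓_k^V` is its
`k`-th iterate. -/
noncomputable def FK {X : Type*} [MeasurableSpace X] (P : X → Measure X)
    (V : X → ℝ) (f : X → ℝ) : X → ℝ :=
  fun x => ∫ y, Real.exp (V y) * f y ∂(P x)

namespace FeynmanKac

variable {X : Type*} [MetricSpace X] [CompactSpace X] [MeasurableSpace X] [BorelSpace X]

lemma integrable_cont (μ : Measure X) [IsFiniteMeasure μ] {f : X → ℝ} (hf : Continuous f) :
    Integrable f μ :=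
  hf.integrable_of_hasCompactSupport (HasCompactSupport.of_compactSpace f)

lemma integral_exp_pos' (μ : Measure X) [IsProbabilityMeasure μ] (h : C(X, ℝ)) :
    0 < ∫ y, Real.exp (h y) ∂μ :=
  integral_exp_pos (integrable_cont μ (by fun_prop))

/-- The logarithmic transition operator `T h (x) = log ∫ exp (h y) P(x, dy)` on `C(X)`; its values
are continuous by the Feller property. -/
noncomputable def logOp (P : X → Measure X) (hP : ∀ x, IsProbabilityMeasure (P x))
    (hFeller : ∀ f : C(X, ℝ), Continuous fun x => ∫ y, f y ∂(P x)) (h : C(X, ℝ)) : C(X, ℝ) where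
  toFun x := Real.log (∫ y, Real.exp (h y) ∂(P x))
  continuous_toFun := by
    have := hP
    exact (hFeller ⟨fun y => Real.exp (h y), by fun_prop⟩).log
      fun x => (integral_exp_pos' (P x) h).ne'

/-- The logarithm `u_k = log 𝔓_k^V 𝟙` of the Feynman–Kac iterates, defined by the recursion
`u₀ = 0`, `u_{k+1} = T (V + u_k)`. -/
noncomputable def logIter (P : X → Measure X) (hP : ∀ x, IsProbabilityMeasure (P x))
    (hFeller : ∀ f : C(X, ℝ), Continuous fun x => ∫ y, f y ∂(P x)) (V : C(X, ℝ)) (k : ℕ) :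
    C(X, ℝ) :=
  (fun u => logOp P hP hFeller (V + u))^[k] 0

variable {P : X → Measure X} {hP : ∀ x, IsProbabilityMeasure (P x)}
  {hFeller : ∀ f : C(X, ℝ), Continuous fun x => ∫ y, f y ∂(P x)}

lemma exp_logOp (h : C(X, ℝ)) (x : X) :
    Real.exp (logOp P hP hFeller h x) = ∫ y, Real.exp (h y) ∂(P x) :=
  have := hP
  Real.exp_log (integral_exp_pos' (P x) h)

lemma logOp_mono_add {f g : C(X, ℝ)} {c : ℝ} (h : ∀ x, f x ≤ g x + c) (x : X) :
    logOp P hP hFeller f x ≤ logOp P hP hFeller g x + c := by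
  have := hP
  rw [← Real.exp_le_exp, Real.exp_add, exp_logOp, exp_logOp, ← integral_mul_const]
  refine integral_mono (integrable_cont _ (by fun_prop)) (integrable_cont _ (by fun_prop)) ?_
  intro y
  simpa [← Real.exp_add] using h y

lemma integral_exp_sub (f : C(X, ℝ)) (x : X) :
    ∫ y, Real.exp (f y - logOp P hP hFeller f x) ∂(P x) = 1 := by
  simp_rw [Real.exp_sub]
  rw [integral_div, ← exp_logOp (hP := hP) (hFeller := hFeller), div_self (Real.exp_pos _).ne']

/-- After normalising so that `∫ exp f = ∫ exp g = 1`, convexity of the log-integral reduces to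
convexity of `exp`. -/
lemma convexOn_logOp (x : X) :
    ConvexOn ℝ Set.univ fun f : C(X, ℝ) => logOp P hP hFeller f x := by
  have := hP
  refine ⟨convex_univ, fun f _ g _ s t hs ht hst => ?_⟩
  set a := logOp P hP hFeller f x with ha
  set b := logOp P hP hFeller g x with hb
  have key : ∫ y, Real.exp (s * (f y - a) + t * (g y - b)) ∂(P x) ≤ 1 := by
    calc _ ≤ ∫ y, (s * Real.exp (f y - a) + t * Real.exp (g y - b)) ∂(P x) := by
          refine integral_mono (integrable_cont _ (by fun_prop))
            (integrable_cont _ (by fun_prop)) fun y => ?_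
          exact convexOn_exp.2 (Set.mem_univ _) (Set.mem_univ _) hs ht hst
      _ = 1 := by
          rw [integral_add (integrable_cont _ (by fun_prop)) (integrable_cont _ (by fun_prop)),
            integral_const_mul, integral_const_mul, ha, hb, integral_exp_sub, integral_exp_sub]
          linarith
  rw [← Real.exp_le_exp, exp_logOp]
  have e : ∀ y, Real.exp ((s • f + t • g) y) =
      Real.exp (s * (f y - a) + t * (g y - b)) * Real.exp (s • a + t • b) := by
    intro y
    rw [← Real.exp_add]
    congr 1
    simp
    ring
  simp_rw [e]
  rw [integral_mul_const]
  exact mul_le_of_le_one_left (Real.exp_pos _).le key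

lemma logIter_succ (V : C(X, ℝ)) (k : ℕ) :
    logIter P hP hFeller V (k + 1) = logOp P hP hFeller (V + logIter P hP hFeller V k) :=
  Function.iterate_succ_apply' _ _ _

lemma FK_iterate (V : C(X, ℝ)) (k : ℕ) :
    (FK P V)^[k] (fun _ => 1) = fun x => Real.exp (logIter P hP hFeller V k x) := by
  induction k with
  | zero => simp [logIter]
  | succ k ih =>
    rw [Function.iterate_succ_apply', ih]
    ext x
    rw [logIter_succ, exp_logOp]
    simp [FK, Real.exp_add]

lemma logIter_mono_add {V W : C(X, ℝ)} {c : ℝ} (h : ∀ x, V x ≤ W x + c) (k : ℕ) (x : X) :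
    logIter P hP hFeller V k x ≤ logIter P hP hFeller W k x + k * c := by
  induction k generalizing x with
  | zero => simp [logIter]
  | succ k ih =>
    rw [logIter_succ, logIter_succ]
    refine logOp_mono_add (fun y => ?_) x
    have := ih y
    have := h y
    push_cast [ContinuousMap.add_apply]
    linarith

lemma logIter_convex (V W : C(X, ℝ)) {s t : ℝ} (hs : 0 ≤ s) (ht : 0 ≤ t) (hst : s + t = 1)
    (k : ℕ) (x : X) :
    logIter P hP hFeller (s • V + t • W) k x ≤
      s * logIter P hP hFeller V k x + t * logIter P hP hFeller W k x := by
  induction k generalizing x with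
  | zero => simp [logIter]
  | succ k ih =>
    simp only [logIter_succ]
    refine le_trans ?_ ((convexOn_logOp x).2 (Set.mem_univ _) (Set.mem_univ _) hs ht hst)
    refine (logOp_mono_add (c := 0) (fun y => ?_) x).trans_eq (add_zero _)
    have := ih y
    simp only [ContinuousMap.add_apply, ContinuousMap.smul_apply, smul_eq_mul]
    linarith

/-- For `V = h - T h` the iterates `u_k` stay within `‖T h‖` of the fixed point `T h`. -/
lemma logIter_sub_logOp (h : C(X, ℝ)) (k : ℕ) (x : X) :
    |logIter P hP hFeller (h - logOp P hP hFeller h) k x - logOp P hP hFeller h x| ≤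
      ‖logOp P hP hFeller h‖ := by
  induction k generalizing x with
  | zero => simpa [logIter] using (logOp P hP hFeller h).norm_coe_le_norm x
  | succ k ih =>
    rw [logIter_succ, abs_sub_le_iff, sub_le_iff_le_add', sub_le_iff_le_add']
    constructor
    · refine logOp_mono_add (fun y => ?_) x
      have := (abs_sub_le_iff.1 (ih y)).1
      simp only [ContinuousMap.add_apply, ContinuousMap.sub_apply]
      linarith
    · refine logOp_mono_add (fun y => ?_) x
      have := (abs_sub_le_iff.1 (ih y)).2
      simp only [ContinuousMap.add_apply, ContinuousMap.sub_apply]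
      linarith

/-- For `h = V + w` with `w` the average of `u₀, …, u_{k-1}`, convexity of `T` and telescoping give
`T h ≤ w + u_k / k`. -/
lemma exists_sub_logOp_ge (V : C(X, ℝ)) {k : ℕ} (hk : k ≠ 0) :
    ∃ h : C(X, ℝ), ∀ x, V x - (k : ℝ)⁻¹ * logIter P hP hFeller V k x ≤
      h x - logOp P hP hFeller h x := by
  have hk' : (k : ℝ) ≠ 0 := by exact_mod_cast hk
  set u := logIter P hP hFeller V with hu
  refine ⟨∑ j ∈ Finset.range k, (k : ℝ)⁻¹ • (V + u j), fun x => ?_⟩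
  have hc := (convexOn_logOp (hP := hP) (hFeller := hFeller) x).map_sum_le
    (t := Finset.range k) (w := fun _ => (k : ℝ)⁻¹) (p := fun j => V + u j)
    (fun _ _ => by positivity) (by simp [hk']) (fun _ _ => Set.mem_univ _)
  simp only [hu, ← logIter_succ] at hc
  rw [← hu] at hc
  have h0 : u 0 x = 0 := by simp [hu, logIter]
  have htel := Finset.sum_range_sub (fun j => u j x) k
  rw [Finset.sum_sub_distrib, h0, sub_zero] at htel
  have e : (∑ j ∈ Finset.range k, (k : ℝ)⁻¹ • (V + u j)) x =
      V x + (k : ℝ)⁻¹ * ∑ j ∈ Finset.range k, u j x := by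
    simp only [ContinuousMap.coe_sum, Finset.sum_apply, ContinuousMap.smul_apply,
      ContinuousMap.add_apply, smul_eq_mul, mul_add, Finset.sum_add_distrib, Finset.mul_sum]
    simp [hk']
  rw [e]
  simp only [smul_eq_mul, ← Finset.mul_sum] at hc
  rw [← htel, mul_sub]
  linarith

end FeynmanKac

open FeynmanKac in
/-- If for every `V ∈ C(X)` the limit
`Q(V) = lim_k (1/k) log (𝔓_k^V 𝟙)(x)` exists uniformly in `x` and does not depend on `x`,
then `Q` is a convex `1`-Lipschitz function satisfying `Q(V+c) = Q(V)+c`, and its Legendre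
transform satisfies, for every probability measure `λ`,
`I(λ) = sup_{g>0, g ∈ C(X)} ∫ log (g / 𝔓₁ g) dλ`. -/
theorem stmt0
    {X : Type*} [MetricSpace X] [CompactSpace X] [Nonempty X]
    [MeasurableSpace X] [BorelSpace X]
    (P : X → Measure X) (hP : ∀ x, IsProbabilityMeasure (P x))
    (hFeller : ∀ f : C(X, ℝ), Continuous fun x => ∫ y, f y ∂(P x))
    (Q : C(X, ℝ) → ℝ)
    (hQ : ∀ V : C(X, ℝ), TendstoUniformly
      (fun (k : ℕ) (x : X) => (k : ℝ)⁻¹ * Real.log ((FK P ⇑V)^[k] (fun _ => 1) x))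
      (fun _ => Q V) atTop) :
    ConvexOn ℝ Set.univ Q ∧ LipschitzWith 1 Q ∧
    (∀ (V : C(X, ℝ)) (c : ℝ), Q (V + ContinuousMap.const X c) = Q V + c) ∧
    (∀ lam : Measure X, IsProbabilityMeasure lam →
      (⨆ V : C(X, ℝ), (((∫ x, V x ∂lam) - Q V : ℝ) : EReal)) =
        ⨆ (g : C(X, ℝ)) (_ : ∀ x, 0 < g x),
          ((∫ x, Real.log (g x / ∫ y, g y ∂(P x)) ∂lam : ℝ) : EReal)) := by
  have hlim : ∀ V : C(X, ℝ), TendstoUniformly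
      (fun (k : ℕ) (x : X) => (k : ℝ)⁻¹ * logIter P hP hFeller V k x)
      (fun _ => Q V) atTop := by
    intro V
    have := hQ V
    simp_rw [FK_iterate (hP := hP) (hFeller := hFeller), Real.log_exp] at this
    exact this
  obtain ⟨x₀⟩ := ‹Nonempty X›
  have hpt : ∀ V : C(X, ℝ), Tendsto
      (fun k : ℕ => (k : ℝ)⁻¹ * logIter P hP hFeller V k x₀) atTop (𝓝 (Q V)) :=
    fun V => (hlim V).tendsto_at x₀
  have hmono : ∀ (V W : C(X, ℝ)) (c : ℝ), (∀ x, V x ≤ W x + c) → Q V ≤ Q W + c := by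
    intro V W c h
    refine le_of_tendsto_of_tendsto (hpt V) ((hpt W).add_const c) ?_
    filter_upwards [eventually_ne_atTop 0] with k hk
    have hk' : (k : ℝ) ≠ 0 := by exact_mod_cast hk
    have h1 := mul_le_mul_of_nonneg_left (logIter_mono_add (hP := hP) (hFeller := hFeller) h k x₀)
      (inv_nonneg.2 (Nat.cast_nonneg (α := ℝ) k))
    rwa [mul_add, inv_mul_cancel_left₀ hk'] at h1
  have hzero : ∀ h : C(X, ℝ), Q (h - logOp P hP hFeller h) = 0 := by
    intro h
    refine tendsto_nhds_unique (hpt _) ?_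
    refine squeeze_zero_norm (a := fun k : ℕ => (k : ℝ)⁻¹ *
      (2 * ‖logOp P hP hFeller h‖)) (fun k => ?_) ?_
    · rw [norm_mul, norm_inv, RCLike.norm_natCast]
      gcongr
      have h1 := logIter_sub_logOp (P := P) (hP := hP) (hFeller := hFeller) h k x₀
      have h2 := (logOp P hP hFeller h).norm_coe_le_norm x₀
      rw [Real.norm_eq_abs, abs_le] at h2 ⊢
      rw [abs_le] at h1
      constructor <;> linarith [h1.1, h1.2, h2.1, h2.2]
    · simpa using (tendsto_inv_atTop_nhds_zero_nat (𝕜 := ℝ)).mul_const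
        (2 * ‖logOp P hP hFeller h‖)
  refine ⟨⟨convex_univ, fun V _ W _ s t hs ht hst => ?_⟩, ?_, fun V c => ?_, fun lam hlam => ?_⟩
  · refine le_of_tendsto_of_tendsto' (hpt _) (((hpt V).const_mul s).add ((hpt W).const_mul t))
      fun k => ?_
    have h1 := mul_le_mul_of_nonneg_left
      (logIter_convex (hP := hP) (hFeller := hFeller) V W hs ht hst k x₀)
      (inv_nonneg.2 (Nat.cast_nonneg (α := ℝ) k))
    linarith
  · refine LipschitzWith.of_le_add fun V W => hmono V W _ fun x => ?_
    have := (abs_le.1 ((V.dist_apply_le_dist (g := W) x))).2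
    linarith
  · refine le_antisymm (hmono _ _ _ fun x => by simp) ?_
    have := hmono V (V + ContinuousMap.const X c) (-c) fun x => by simp
    linarith
  · refine le_antisymm (iSup_le fun V => ?_) (iSup₂_le fun g hg => ?_)
    · refine EReal.ge_of_forall_gt_iff_ge.1 fun z hz => ?_
      rw [EReal.coe_lt_coe_iff] at hz
      obtain ⟨k, hk, hk0⟩ := ((Metric.tendstoUniformly_iff.1 (hlim V) _ (sub_pos.2 hz)).and
        (eventually_ne_atTop 0)).exists
      obtain ⟨h, hh⟩ := exists_sub_logOp_ge (P := P) (hP := hP) (hFeller := hFeller) V hk0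
      refine le_trans ?_ (le_iSup₂ (f := fun (g : C(X, ℝ)) (_ : ∀ x, 0 < g x) =>
        ((∫ x, Real.log (g x / ∫ y, g y ∂(P x)) ∂lam : ℝ) : EReal))
        ⟨fun x => Real.exp (h x), by fun_prop⟩ fun x => Real.exp_pos _)
      rw [EReal.coe_le_coe_iff]
      have e : ∀ x, Real.log (Real.exp (h x) / ∫ y, Real.exp (h y) ∂(P x)) =
          h x - logOp P hP hFeller h x := by
        intro x
        rw [← exp_logOp (hP := hP) (hFeller := hFeller), ← Real.exp_sub, Real.log_exp]
      simp only [ContinuousMap.coe_mk, e]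
      -- `V + (z - ⟨V, λ⟩)` has integral `z`
      calc z = ∫ x, (V x + (z - ∫ x, V x ∂lam)) ∂lam := by
            rw [integral_add (integrable_cont _ (by fun_prop)) (integrable_const _)]
            simp
        _ ≤ _ := by
            refine integral_mono (integrable_cont _ (by fun_prop))
              (integrable_cont _ (by fun_prop)) fun x => ?_
            have h1 := (abs_lt.1 (hk x)).1
            have h2 := hh x
            simp only
            linarith
    · set h : C(X, ℝ) := ⟨fun x => Real.log (g x), g.continuous.log fun x => (hg x).ne'⟩ with hh
      refine le_trans (le_of_eq ?_) (le_iSup _ (h - logOp P hP hFeller h))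
      rw [hzero, sub_zero]
      congr 1
      refine integral_congr_ae (Eventually.of_forall fun x => ?_)
      have e : ∀ y, Real.exp (h y) = g y := fun y => Real.exp_log (hg y)
      have e2 := exp_logOp (P := P) (hP := hP) (hFeller := hFeller) h x
      simp only [e] at e2
      simp only [← e2, ContinuousMap.sub_apply]
      rw [Real.log_div (hg x).ne' (Real.exp_pos _).ne', Real.log_exp]
      rfl
end

section
/- Let V ∈ C(X) be such that (1/k)·log (𝔓_k^V 𝟙)(x) → 0 as k → ∞, uniformly in x ∈ X. Then for every ε > 0 the series g_ε := e^V · Σ_{k≥0} e^{-εk} 𝔓_k^V 𝟙 converges uniformly on X and defines a strictly positive continuous function which satisfies 𝔓₁ g_ε = e^{ε} (e^{-V} g_ε − 𝟙); in particular, log(g_ε / 𝔓₁ g_ε) ≥ V − ε pointwise on X. -/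
/-!
Write `a k = 𝔓_k^V 𝟙`; by the Feller property each `a k` is continuous, and it is strictly positive.
The hypothesis gives `a k ≤ e^{kε/2}` on all of `X` once `k` is large, so the series
`s = ∑ e^{-εk} a k` is eventually dominated by the geometric series of ratio `e^{-ε/2}` and the
Weierstrass test applies. Integrating term by term with `𝔓₁ (e^V a k) = a (k+1)` shifts the
index, so that `𝔓₁ (e^V s) = e^ε (s - 1)`. The left side is positive, hence `s > 1`, and
`e^V s / (e^ε (s - 1)) ≥ e^{V - ε}`.
-/

open MeasureTheory Filter Topology

lemma FK_continuous {X : Type*} [MetricSpace X] [MeasurableSpace X]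
    {P : X → Measure X}
    (hFeller : ∀ f : C(X, ℝ), Continuous fun x => ∫ y, f y ∂(P x))
    (V : C(X, ℝ)) {f : X → ℝ} (hf : Continuous f) : Continuous (FK P V f) :=
  hFeller ⟨fun y => Real.exp (V y) * f y, by fun_prop⟩

lemma integrable_of_continuous_compact {X : Type*} [MetricSpace X] [CompactSpace X]
    [MeasurableSpace X] [BorelSpace X] (μ : Measure X) [IsProbabilityMeasure μ]
    {f : X → ℝ} (hf : Continuous f) : Integrable f μ :=
  hf.integrable_of_hasCompactSupport (HasCompactSupport.of_compactSpace f)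

lemma integral_pos_of_continuous_pos {X : Type*} [MetricSpace X] [CompactSpace X]
    [MeasurableSpace X] [BorelSpace X] (μ : Measure X) [IsProbabilityMeasure μ]
    {f : X → ℝ} (hf : Continuous f) (hpos : ∀ x, 0 < f x) : 0 < ∫ x, f x ∂μ := by
  rw [integral_pos_iff_support_of_nonneg (fun x => (hpos x).le)
    (integrable_of_continuous_compact μ hf)]
  have : Function.support f = Set.univ := by
    ext x
    simp [(hpos x).ne']
  simp [this]

lemma FK_iterate_one {X : Type*} [MetricSpace X] [CompactSpace X]
    [MeasurableSpace X] [BorelSpace X]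
    {P : X → Measure X} (hP : ∀ x, IsProbabilityMeasure (P x))
    (hFeller : ∀ f : C(X, ℝ), Continuous fun x => ∫ y, f y ∂(P x))
    (V : C(X, ℝ)) (k : ℕ) :
    Continuous ((FK P V)^[k] (fun _ => 1)) ∧ ∀ x, 0 < (FK P V)^[k] (fun _ => 1) x := by
  induction k with
  | zero => exact ⟨continuous_const, fun _ => one_pos⟩
  | succ k ih =>
    rw [Function.iterate_succ_apply']
    refine ⟨FK_continuous hFeller V ih.1, fun x => ?_⟩
    have hc : Continuous fun y => Real.exp (V y) * (FK P V)^[k] (fun _ => 1) y :=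
      (Real.continuous_exp.comp V.continuous).mul ih.1
    exact integral_pos_of_continuous_pos (P x) hc fun y => mul_pos (Real.exp_pos _) (ih.2 y)

/-- If `(1/k) log (𝔓_k^V 𝟙) → 0` uniformly, then for every `ε > 0` the
series `g_ε = e^V Σ_{k ≥ 0} e^{-εk} 𝔓_k^V 𝟙` converges uniformly on `X` and defines a
strictly positive continuous function such that `𝔓₁ g_ε = e^ε (e^{-V} g_ε − 𝟙)`; in
particular `log (g_ε / 𝔓₁ g_ε) ≥ V − ε` pointwise.  Here `g_ε x = exp (V x) * s x` where
`s` is the (uniform) sum of the series. -/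
theorem stmt2
    {X : Type*} [MetricSpace X] [CompactSpace X] [Nonempty X]
    [MeasurableSpace X] [BorelSpace X]
    (P : X → Measure X) (hP : ∀ x, IsProbabilityMeasure (P x))
    (hFeller : ∀ f : C(X, ℝ), Continuous fun x => ∫ y, f y ∂(P x))
    (V : C(X, ℝ))
    (hV : TendstoUniformly
      (fun (k : ℕ) (x : X) => (k : ℝ)⁻¹ * Real.log ((FK P ⇑V)^[k] (fun _ => 1) x))
      (fun _ => 0) atTop)
    (ε : ℝ) (hε : 0 < ε) :
    ∃ s : X → ℝ,
      TendstoUniformly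
        (fun (n : ℕ) (x : X) =>
          ∑ k ∈ Finset.range n, Real.exp (-ε * k) * (FK P ⇑V)^[k] (fun _ => 1) x)
        s atTop ∧
      Continuous (fun x => Real.exp (V x) * s x) ∧
      (∀ x, 0 < Real.exp (V x) * s x) ∧
      (∀ x, (∫ y, Real.exp (V y) * s y ∂(P x)) =
          Real.exp ε * (Real.exp (-(V x)) * (Real.exp (V x) * s x) - 1)) ∧
      (∀ x, V x - ε ≤
          Real.log ((Real.exp (V x) * s x) / ∫ y, Real.exp (V y) * s y ∂(P x))) := by
  set a : ℕ → X → ℝ := fun k => (FK P ⇑V)^[k] (fun _ => 1) with ha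
  have hac : ∀ k, Continuous (a k) := fun k => (FK_iterate_one hP hFeller V k).1
  have hap : ∀ k x, 0 < a k x := fun k => (FK_iterate_one hP hFeller V k).2
  have hsucc : ∀ k x, ∫ y, Real.exp (V y) * a k y ∂(P x) = a (k + 1) x := by
    intro k x
    simp only [ha, Function.iterate_succ_apply']
    rfl
  have hu : Summable fun k : ℕ => Real.exp (-(ε / 2)) ^ k :=
    summable_geometric_of_lt_one (Real.exp_pos _).le (by rw [← Real.exp_zero]; exact Real.exp_lt_exp.2 (by linarith))
  have hbound : ∀ᶠ k : ℕ in atTop, ∀ x, ‖Real.exp (-ε * k) * a k x‖ ≤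
      Real.exp (-(ε / 2)) ^ k := by
    filter_upwards [Metric.tendstoUniformly_iff.1 hV (ε / 2) (by linarith),
      eventually_gt_atTop 0] with k hk hk0 x
    have hk0' : (0 : ℝ) < k := by exact_mod_cast hk0
    have h1 : (k : ℝ)⁻¹ * Real.log (a k x) < ε / 2 := by
      have := hk x
      rw [dist_comm, Real.dist_eq, sub_zero] at this
      exact (abs_lt.1 this).2
    rw [inv_mul_lt_iff₀ hk0', Real.log_lt_iff_lt_exp (hap k x)] at h1
    rw [Real.norm_of_nonneg (mul_pos (Real.exp_pos _) (hap k x)).le]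
    calc Real.exp (-ε * k) * a k x ≤ Real.exp (-ε * k) * Real.exp (k * (ε / 2)) := by gcongr
      _ = Real.exp (-(ε / 2)) ^ k := by
        rw [← Real.exp_add, ← Real.exp_nat_mul]
        congr 1
        ring
  have hunif : TendstoUniformly
      (fun (n : ℕ) (x : X) => ∑ k ∈ Finset.range n, Real.exp (-ε * k) * a k x)
      (fun x => ∑' k : ℕ, Real.exp (-ε * k) * a k x) atTop := by
    rw [← tendstoUniformlyOn_univ]
    exact tendstoUniformlyOn_tsum_nat_eventually
      (f := fun (k : ℕ) x => Real.exp (-ε * k) * a k x) hu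
      (hbound.mono fun k hk x _ => hk x)
  have hsum : ∀ x, Summable fun k : ℕ => Real.exp (-ε * k) * a k x := fun x =>
    Summable.of_norm_bounded_eventually_nat hu (hbound.mono fun k hk => hk x)
  set s : X → ℝ := fun x => ∑' k : ℕ, Real.exp (-ε * k) * a k x with hs
  have hsc : Continuous s :=
    hunif.continuous (Frequently.of_forall fun n =>
      continuous_finsetSum _ fun k _ => continuous_const.mul (hac k))
  have hspos : ∀ x, 0 < s x := fun x =>
    (hsum x).tsum_pos (fun k => (mul_pos (Real.exp_pos _) (hap k x)).le) 0
      (mul_pos (Real.exp_pos _) (hap 0 x))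
  have hgc : Continuous fun x => Real.exp (V x) * s x := by fun_prop
  have hgpos : ∀ x, 0 < Real.exp (V x) * s x := fun x => mul_pos (Real.exp_pos _) (hspos x)
  have hint : ∀ x, ∫ y, Real.exp (V y) * s y ∂(P x) = Real.exp ε * (s x - 1) := by
    intro x
    -- The `k`-th term of `e^V s` integrates to `e^ε` times the `(k+1)`-st term of `s`.
    have hterm : ∀ k : ℕ, ∫ y, Real.exp (V y) * (Real.exp (-ε * k) * a k y) ∂(P x) =
        Real.exp ε * (Real.exp (-ε * (k + 1 : ℕ)) * a (k + 1) x) := by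
      intro k
      have he : Real.exp ε * Real.exp (-ε * (k + 1 : ℕ)) = Real.exp (-ε * k) := by
        rw [← Real.exp_add]
        congr 1
        push_cast
        ring
      rw [← mul_assoc, he, ← hsucc, ← integral_const_mul]
      congr 1
      ext y
      ring
    have hshift : Summable fun k : ℕ =>
        Real.exp ε * (Real.exp (-ε * (k + 1 : ℕ)) * a (k + 1) x) :=
      ((summable_nat_add_iff 1).2 (hsum x)).mul_left _
    have hswap := integral_tsum_of_summable_integral_norm (μ := P x)
      (F := fun (k : ℕ) y => Real.exp (V y) * (Real.exp (-ε * k) * a k y))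
      (fun k => integrable_of_continuous_compact (P x)
        ((Real.continuous_exp.comp V.continuous).mul (continuous_const.mul (hac k))))
      (by
        refine hshift.congr fun k => ?_
        rw [← hterm]
        congr 1
        ext y
        exact (Real.norm_of_nonneg
          (mul_pos (Real.exp_pos _) (mul_pos (Real.exp_pos _) (hap k y))).le).symm)
    simp only [tsum_mul_left] at hswap
    rw [← hswap, tsum_congr hterm, tsum_mul_left]
    congr 1
    have h0 := (hsum x).tsum_eq_zero_add
    have ha0 : a 0 x = 1 := rfl
    simp only [Nat.cast_zero, mul_zero, Real.exp_zero, one_mul, ha0] at h0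
    simp only [hs]
    linarith
  refine ⟨s, hunif, hgc, hgpos, fun x => ?_, fun x => ?_⟩
  · rw [hint, ← mul_assoc (Real.exp (-(V x))), ← Real.exp_add, neg_add_cancel, Real.exp_zero,
      one_mul]
  · have hI : 0 < ∫ y, Real.exp (V y) * s y ∂(P x) :=
      integral_pos_of_continuous_pos (P x) hgc hgpos
    rw [Real.le_log_iff_exp_le (div_pos (hgpos x) hI), le_div_iff₀ hI, hint, ← mul_assoc,
      ← Real.exp_add, sub_add_cancel]
    gcongr
    linarith
end

section
/- Let σ be a Borel probability measure on X such that ∫_X log(g / 𝔓₁ g) dσ ≤ 0 for every strictly positive g ∈ C(X). Then σ is a stationary measure: ∫_X (𝔓₁ f) dσ = ∫_X f dσ for every f ∈ C(X), i.e., 𝔓₁^* σ = σ. -/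
/-!
The hypothesis says that `g ↦ ∫ log (g / 𝔓₁ g) dσ` is maximal at the constant functions, so its
first variation there vanishes. Take `g = t + f` with `t` large, so that `𝔓₁ g = t + 𝔓₁ f`. From
`log u ≥ 1 - u⁻¹` one gets `t log (g / 𝔓₁ g) ≥ t (f - 𝔓₁ f) / (t + f) = f - 𝔓₁ f + O(1/t)`
uniformly on `X`. Integrating and letting `t → ∞` gives `∫ f dσ ≤ ∫ 𝔓₁ f dσ`; the same for `-f`
gives equality.
-/

open MeasureTheory Filter Topology

/-- Pointwise lower bound for the logarithm, with `a = f x` and `b = 𝔓₁ f x`. -/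
lemma sub_sub_le_mul_log {a b M t : ℝ} (hM : 0 < M) (ha : |a| ≤ M) (hb : |b| ≤ M)
    (ht : 2 * M ≤ t) :
    (a - b) - 4 * M ^ 2 / t ≤ t * Real.log ((t + a) / (t + b)) := by
  obtain ⟨ha1, ha2⟩ := abs_le.mp ha
  obtain ⟨hb1, hb2⟩ := abs_le.mp hb
  have ht0 : 0 < t := by linarith
  have hta : 0 < t + a := by linarith
  have htb : 0 < t + b := by linarith
  have hlog := Real.one_sub_inv_le_log_of_pos (div_pos hta htb)
  refine le_trans ?_ (mul_le_mul_of_nonneg_left hlog ht0.le)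
  -- The error `(a - b) - t (a - b) / (t + a)` is `a (a - b) / (t + a)`, where `t + a ≥ t / 2`.
  have hid : t * (1 - ((t + a) / (t + b))⁻¹) = (a - b) - a * (a - b) / (t + a) := by
    field_simp
    ring
  have hbd : a * (a - b) / (t + a) ≤ 4 * M ^ 2 / t := by
    have h1 : a * (a - b) ≤ 2 * M ^ 2 := by nlinarith
    rw [div_le_div_iff₀ hta ht0]
    nlinarith [mul_le_mul_of_nonneg_right h1 ht0.le, sq_nonneg M]
  linarith

/-- One of the two inequalities; the other is the same statement for `-f`. -/
lemma integral_sub_nonpos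
    {X : Type*} [MetricSpace X] [CompactSpace X]
    [MeasurableSpace X] [BorelSpace X]
    (P : X → Measure X) (hP : ∀ x, IsProbabilityMeasure (P x))
    (hFeller : ∀ f : C(X, ℝ), Continuous fun x => ∫ y, f y ∂(P x))
    (σ : Measure X) (hσ : IsProbabilityMeasure σ)
    (h : ∀ g : C(X, ℝ), (∀ x, 0 < g x) →
      ∫ x, Real.log (g x / ∫ y, g y ∂(P x)) ∂σ ≤ 0) (f : C(X, ℝ)) :
    ∫ x, (f x - ∫ y, f y ∂(P x)) ∂σ ≤ 0 := by
  have hint : ∀ (μ : Measure X) [IsProbabilityMeasure μ] (k : X → ℝ), Continuous k →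
      Integrable k μ := fun μ _ k hk =>
    hk.integrable_of_hasCompactSupport (HasCompactSupport.of_compactSpace k)
  set M : ℝ := ‖f‖ + 1 with hMdef
  have hM : 0 < M := by positivity
  have hf : ∀ x, |f x| ≤ M := fun x => by
    have := f.norm_coe_le_norm x
    rw [Real.norm_eq_abs] at this
    linarith
  have hPf : ∀ x, |∫ y, f y ∂(P x)| ≤ M := fun x => by
    have := hP x
    have := norm_integral_le_of_norm_le_const (μ := P x) (f := f) (C := M)
      (Eventually.of_forall fun y => hf y)
    simpa using this
  have key : ∀ t : ℝ, 2 * M ≤ t →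
      ∫ x, (f x - ∫ y, f y ∂(P x)) ∂σ ≤ 4 * M ^ 2 / t := by
    intro t ht
    have hpos : ∀ x, 0 < t + f x := fun x => by linarith [(abs_le.mp (hf x)).1]
    have hposP : ∀ x, 0 < t + ∫ y, f y ∂(P x) := fun x => by
      linarith [(abs_le.mp (hPf x)).1]
    have hg := h (ContinuousMap.const X t + f) hpos
    have hPg : ∀ x, ∫ y, (t + f y) ∂(P x) = t + ∫ y, f y ∂(P x) := by
      intro x
      have := hP x
      rw [integral_add (integrable_const _) (hint _ _ f.continuous)]
      simp
    simp only [ContinuousMap.add_apply, ContinuousMap.const_apply, hPg] at hg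
    have hc1 : Continuous fun x => (f x - ∫ y, f y ∂(P x)) := f.continuous.sub (hFeller f)
    have hc2 : Continuous fun x => t * Real.log ((t + f x) / (t + ∫ y, f y ∂(P x))) :=
      continuous_const.mul (((continuous_const.add f.continuous).div
        (continuous_const.add (hFeller f)) fun x => (hposP x).ne').log
          fun x => (div_pos (hpos x) (hposP x)).ne')
    have hmono := integral_mono (μ := σ)
      ((hint σ _ hc1).sub (integrable_const (4 * M ^ 2 / t))) (hint σ _ hc2)
      fun x => sub_sub_le_mul_log hM (hf x) (hPf x) ht
    simp only [Pi.sub_apply] at hmono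
    rw [integral_sub (hint σ _ hc1) (integrable_const _), integral_const_mul] at hmono
    simp only [integral_const, probReal_univ, one_smul] at hmono
    have : t * ∫ x, Real.log ((t + f x) / (t + ∫ y, f y ∂(P x))) ∂σ ≤ 0 :=
      mul_nonpos_of_nonneg_of_nonpos (by linarith) hg
    linarith
  have hlim : Tendsto (fun t : ℝ => 4 * M ^ 2 / t) atTop (𝓝 0) :=
    tendsto_const_nhds.div_atTop tendsto_id
  refine ge_of_tendsto hlim ?_
  filter_upwards [eventually_ge_atTop (2 * M)] with t ht using key t ht

/-- If a Borel probability measure `σ` satisfies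
`∫ log (g / 𝔓₁ g) dσ ≤ 0` for every strictly positive `g ∈ C(X)`, then `σ` is a
stationary measure for the Markov kernel `P`: `∫ 𝔓₁ f dσ = ∫ f dσ` for all `f ∈ C(X)`,
where `(𝔓₁ f)(x) = ∫ f(y) P(x,dy)`. -/
theorem stmt4
    {X : Type*} [MetricSpace X] [CompactSpace X] [Nonempty X]
    [MeasurableSpace X] [BorelSpace X]
    (P : X → Measure X) (hP : ∀ x, IsProbabilityMeasure (P x))
    (hFeller : ∀ f : C(X, ℝ), Continuous fun x => ∫ y, f y ∂(P x))
    (σ : Measure X) (hσ : IsProbabilityMeasure σ)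
    (h : ∀ g : C(X, ℝ), (∀ x, 0 < g x) →
      ∫ x, Real.log (g x / ∫ y, g y ∂(P x)) ∂σ ≤ 0) :
    ∀ f : C(X, ℝ), ∫ x, (∫ y, f y ∂(P x)) ∂σ = ∫ x, f x ∂σ := by
  intro f
  have hint : ∀ k : X → ℝ, Continuous k → Integrable k σ := fun k hk =>
    hk.integrable_of_hasCompactSupport (HasCompactSupport.of_compactSpace k)
  have h1 := integral_sub_nonpos P hP hFeller σ hσ h f
  have h2 := integral_sub_nonpos P hP hFeller σ hσ h (-f)
  simp only [ContinuousMap.neg_apply, integral_neg, neg_sub_neg] at h2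
  rw [integral_sub (hint _ f.continuous) (hint _ (hFeller f))] at h1
  rw [integral_sub (hint _ (hFeller f)) (hint _ f.continuous)] at h2
  linarith
end

section
/- Suppose that for every integer r ≥ 1 and every V ∈ C(𝔛^r) the limit 𝐐^r(V) = lim_{k→∞} (1/k)·log (𝔓_k^V(r)𝟙)(𝒙) exists uniformly in 𝒙 ∈ 𝔛^r and does not depend on 𝒙. Let 𝐈^r be the Legendre transform of 𝐐^r and define 𝐈(λ) = sup_{r≥1} 𝐈^r(Π^r_* λ) for Borel probability measures λ on 𝔛^{ℤ≥0}. Then for every shift-invariant Borel probability measure λ on 𝔛^{ℤ≥0}, 𝐈(λ) = ∫_{𝔛^{ℤ≤0}} Ent( λ(𝒙,·) | P₁(x₀,·) ) λ₋(d𝒙), where x₀ denotes the coordinate of 𝒙 at time 0. -/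
/-!
Write `D` for the relative entropy of `ρ`, the law of the past together with the next letter, with
respect to `ρ.fst ⊗ η`, where `η(p, ·) = P(p₀, ·)`. By the conditional chain rule
(`lintegral_klDiv_eq_klDiv_compProd`) the right-hand side of the theorem equals `D`, so the claim is
that the supremum of `⟨V, λ⟩ - Q(V)` over all word potentials `V` is `D`.

*Upper bound.* The entropy inequality, applied to `f - log P e^f` with `f` a function of words, gives
`∫ f dλ ≤ D + ∫ log (P e^f) dλ` (`integral_word_le`). With `u_k = 𝔓_k^V 𝟙` and `f = V + log u_k` one
has `P e^f = u_{k+1}`. Summing over `k` telescopes to `k ⟨V, λ⟩ ≤ k D + ∫ log u_k dλ`; dividing by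
`k` and letting `k → ∞` yields `⟨V, λ⟩ - Q(V) ≤ D` (`word_functional_le`).

*Lower bound.* Let `M` be the supremum, assumed finite. By the Donsker–Varadhan variational formula
(`klDiv_le_of_dv`) it suffices to show `∫ g dρ ≤ M + log ∫ e^g d(ρ.fst ⊗ η)` for bounded measurable
`g`. This inequality is stable under bounded almost sure limits, so `g` may be taken continuous
(`dv_of_continuous`) and then dependent on finitely many letters of the past and the next letter.
For such a function `G` the potential `V = G - log ∫ e^G P(x₀, dy)` satisfies `𝔓₁^V 𝟙 = 𝟙`, hence
`Q(V) = 0`, so `⟨V, λ⟩ ≤ M`, and Jensen's inequality concludes (`dv_cylinder`).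
-/

open MeasureTheory Filter Topology ProbabilityTheory
open scoped ENNReal NNReal Classical

/-- Shift a word `(x₁,…,x_r)` by appending a new last letter: `(x₂,…,x_r,y)`. -/
def wordPush {X : Type*} {n : ℕ} (x : Fin (n + 1) → X) (y : X) : Fin (n + 1) → X :=
  Fin.snoc (fun i : Fin n => x i.succ) y

/-- The word Feynman–Kac operator `𝔓₁^V(r)` (here `r = n+1`):
`(𝔓₁^V(r) f)(x₁,…,x_r) = ∫ e^{V(x₂,…,x_r,y)} f(x₂,…,x_r,y) P(x_r, dy)`. -/
noncomputable def FKword {X : Type*} [MeasurableSpace X] (P : X → Measure X) {n : ℕ}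
    (V : (Fin (n + 1) → X) → ℝ) (f : (Fin (n + 1) → X) → ℝ) : (Fin (n + 1) → X) → ℝ :=
  fun x => ∫ y, Real.exp (V (wordPush x y)) * f (wordPush x y) ∂(P (x (Fin.last n)))

/-- Relative entropy `Ent(μ|ν) = ∫ log (dμ/dν) dμ` if `μ ≪ ν` (and the integral exists),
`+∞` otherwise. -/
noncomputable def relEnt {Y : Type*} [MeasurableSpace Y] (μ ν : Measure Y) : ℝ≥0∞ :=
  if μ ≪ ν ∧ Integrable (fun y => Real.log (μ.rnDeriv ν y).toReal) μ then
    ENNReal.ofReal (∫ y, Real.log (μ.rnDeriv ν y).toReal ∂μ)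
  else ⊤

/-! ### Relative entropy -/

lemma relEnt_eq_klDiv {Y : Type*} [MeasurableSpace Y] (μ ν : Measure Y)
    [IsProbabilityMeasure μ] [IsProbabilityMeasure ν] :
    relEnt μ ν = InformationTheory.klDiv μ ν := by
  rw [relEnt, InformationTheory.klDiv_def]
  simp [llr_def]

/-- Conditional form of the chain rule for relative entropy. -/
lemma lintegral_klDiv_eq_klDiv_compProd {α β : Type*} [MeasurableSpace α] [MeasurableSpace β]
    [MeasurableSpace.CountableOrCountablyGenerated α β]
    (μ : Measure α) [IsFiniteMeasure μ] (κ η : Kernel α β) [IsFiniteKernel κ] [IsFiniteKernel η] :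
    ∫⁻ a, InformationTheory.klDiv (κ a) (η a) ∂μ
      = InformationTheory.klDiv (μ.compProd κ) (μ.compProd η) := by
  by_cases hac : μ.compProd κ ≪ μ.compProd η
  · have hac' : ∀ᵐ a ∂μ, κ a ≪ η a := Measure.absolutelyContinuous_compProd_right_iff.1 hac
    rw [InformationTheory.klDiv_eq_lintegral_klFun_of_ac hac]
    have hd : (fun p : α × β => Kernel.rnDeriv κ η p.1 p.2) =ᵐ[μ.compProd η]
        (μ.compProd κ).rnDeriv (μ.compProd η) := by
      have h1 : μ.compProd κ
          = (μ.compProd η).withDensity (fun p : α × β => Kernel.rnDeriv κ η p.1 p.2) := by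
        rw [← Measure.compProd_withDensity (Kernel.measurable_rnDeriv κ η)]
        refine Measure.compProd_congr ?_
        filter_upwards [hac'] with a ha
        have h2 := congrArg (fun k : Kernel α β => k a) (Kernel.rnDeriv_add_singularPart κ η)
        rw [add_apply] at h2
        rw [(Kernel.singularPart_eq_zero_iff_absolutelyContinuous κ η a).2 ha, add_zero] at h2
        exact h2.symm
      have h3 := Measure.rnDeriv_withDensity (μ.compProd η) (Kernel.measurable_rnDeriv κ η)
      rw [← h1] at h3
      exact h3.symm
    have hd' : ∫⁻ p, ENNReal.ofReal (InformationTheory.klFun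
          ((μ.compProd κ).rnDeriv (μ.compProd η) p).toReal) ∂(μ.compProd η)
        = ∫⁻ p, ENNReal.ofReal (InformationTheory.klFun
          (Kernel.rnDeriv κ η p.1 p.2).toReal) ∂(μ.compProd η) := by
      refine lintegral_congr_ae ?_
      filter_upwards [hd] with p hp
      rw [hp]
    rw [hd', Measure.lintegral_compProd]
    swap
    · exact (InformationTheory.measurable_klFun.comp
        (Kernel.measurable_rnDeriv κ η).ennreal_toReal).ennreal_ofReal
    refine lintegral_congr_ae ?_
    filter_upwards [hac'] with a ha
    rw [InformationTheory.klDiv_eq_lintegral_klFun_of_ac ha]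
    refine lintegral_congr_ae ?_
    filter_upwards [Kernel.rnDeriv_eq_rnDeriv_measure (κ := κ) (η := η) (a := a)] with y hy
    rw [hy]
  · rw [InformationTheory.klDiv_of_not_ac hac]
    have hS : MeasurableSet {a | ¬ κ a ≪ η a} :=
      (Kernel.measurableSet_absolutelyContinuous κ η).compl
    have hpos : μ {a | ¬ κ a ≪ η a} ≠ 0 := fun h0 =>
      hac (Measure.absolutelyContinuous_compProd_right_iff.2 (ae_iff.2 h0))
    refine top_le_iff.1 ?_
    calc (⊤ : ℝ≥0∞) = ⊤ * μ {a | ¬ κ a ≪ η a} := (ENNReal.top_mul hpos).symm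
      _ = ∫⁻ a in {a | ¬ κ a ≪ η a}, ⊤ ∂μ := by rw [setLIntegral_const]
      _ ≤ ∫⁻ a in {a | ¬ κ a ≪ η a}, InformationTheory.klDiv (κ a) (η a) ∂μ :=
          setLIntegral_mono' hS fun a ha => by rw [InformationTheory.klDiv_of_not_ac ha]
      _ ≤ _ := setLIntegral_le_lintegral _ _

/-- Entropy inequality: the easy half of the Donsker–Varadhan variational formula. -/
lemma integral_le_klDiv_add_log {α : Type*} [MeasurableSpace α] (μ ν : Measure α)
    [IsProbabilityMeasure μ] [IsProbabilityMeasure ν]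
    (hfin : InformationTheory.klDiv μ ν ≠ ⊤) (g : α → ℝ) (hg : Measurable g) (K : ℝ)
    (hK : ∀ x, |g x| ≤ K) :
    ∫ x, g x ∂μ ≤ (InformationTheory.klDiv μ ν).toReal + Real.log (∫ x, Real.exp (g x) ∂ν) := by
  obtain ⟨hac, hint⟩ := InformationTheory.klDiv_ne_top_iff.1 hfin
  have hgμ : Integrable g μ :=
    Integrable.of_bound hg.aestronglyMeasurable K (ae_of_all _ fun x => by simpa using hK x)
  have hgν : Integrable (fun x => Real.exp (g x)) ν :=
    Integrable.of_bound hg.exp.aestronglyMeasurable (Real.exp K) (ae_of_all _ fun x => by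
      simpa using (abs_le.1 (hK x)).2)
  have : IsProbabilityMeasure (ν.tilted g) := isProbabilityMeasure_tilted hgν
  have h1 := integral_llr_tilted_right hac hgμ hgν hint
  have h2 := InformationTheory.integral_llr_add_sub_measure_univ_nonneg
    (hac.trans (absolutelyContinuous_tilted hgν)) (integrable_llr_tilted_right hac hgμ hint hgν)
  have h3 := InformationTheory.toReal_klDiv_of_measure_eq hac (by simp)
  simp only [probReal_univ] at h2
  linarith

/-- The set of test functions satisfying the Donsker–Varadhan inequality with constant `M` is
closed under bounded almost sure convergence. -/
lemma dv_of_tendsto {α : Type*} [MeasurableSpace α] (μ ν : Measure α)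
    [IsProbabilityMeasure μ] [IsProbabilityMeasure ν] (M K : ℝ) (g : α → ℝ) (G : ℕ → α → ℝ)
    (hG : ∀ n, Measurable (G n)) (hK : ∀ n x, |G n x| ≤ K)
    (hμ : ∀ᵐ x ∂μ, Tendsto (fun n => G n x) atTop (𝓝 (g x)))
    (hν : ∀ᵐ x ∂ν, Tendsto (fun n => G n x) atTop (𝓝 (g x)))
    (h : ∀ n, ∫ x, G n x ∂μ ≤ M + Real.log (∫ x, Real.exp (G n x) ∂ν)) :
    ∫ x, g x ∂μ ≤ M + Real.log (∫ x, Real.exp (g x) ∂ν) := by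
  have h1 : Tendsto (fun n => ∫ x, G n x ∂μ) atTop (𝓝 (∫ x, g x ∂μ)) :=
    tendsto_integral_of_dominated_convergence (fun _ => K)
      (fun n => (hG n).aestronglyMeasurable) (integrable_const K)
      (fun n => ae_of_all _ fun x => by simpa using hK n x) hμ
  have h2 : Tendsto (fun n => ∫ x, Real.exp (G n x) ∂ν) atTop (𝓝 (∫ x, Real.exp (g x) ∂ν)) :=
    tendsto_integral_of_dominated_convergence (fun _ => Real.exp K)
      (fun n => (hG n).exp.aestronglyMeasurable) (integrable_const _)
      (fun n => ae_of_all _ fun x => by simpa using (abs_le.1 (hK n x)).2)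
      (hν.mono fun x hx => (Real.continuous_exp.tendsto _).comp hx)
  have hpos : Real.exp (-K) ≤ ∫ x, Real.exp (g x) ∂ν := by
    refine ge_of_tendsto' h2 fun n => ?_
    have := integral_mono (μ := ν) (integrable_const (Real.exp (-K)))
      (Integrable.of_bound (hG n).exp.aestronglyMeasurable (Real.exp K)
        (ae_of_all _ fun x => by simpa using (abs_le.1 (hK n x)).2))
      (fun x => Real.exp_le_exp.2 (abs_le.1 (hK n x)).1)
    simpa using this
  refine le_of_tendsto_of_tendsto' h1 (h2.log ?_ |>.const_add M) h
  exact ((Real.exp_pos _).trans_le hpos).ne'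

/-- Approximation step: the Donsker–Varadhan inequality passes from bounded continuous to bounded
measurable test functions. -/
lemma dv_of_continuous {α : Type*} [TopologicalSpace α] [MeasurableSpace α] [BorelSpace α]
    [TopologicalSpace.PseudoMetrizableSpace α]
    (μ ν : Measure α) [IsProbabilityMeasure μ] [IsProbabilityMeasure ν] (M : ℝ)
    (h : ∀ g : α → ℝ, Continuous g → (∃ K, ∀ x, |g x| ≤ K) →
      ∫ x, g x ∂μ ≤ M + Real.log (∫ x, Real.exp (g x) ∂ν))
    (g : α → ℝ) (hg : Measurable g) (K : ℝ) (hK : ∀ x, |g x| ≤ K) :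
    ∫ x, g x ∂μ ≤ M + Real.log (∫ x, Real.exp (g x) ∂ν) := by
  let _ := TopologicalSpace.pseudoMetrizableSpacePseudoMetric α
  have hgi : Integrable g (μ + ν) :=
    Integrable.of_bound hg.aestronglyMeasurable K (ae_of_all _ fun x => by simpa using hK x)
  have hex : ∀ n : ℕ, ∃ f : BoundedContinuousFunction α ℝ,
      eLpNorm (g - ⇑f) 1 (μ + ν) ≤ (n + 1 : ℝ≥0∞)⁻¹ ∧ MemLp f 1 (μ + ν) := fun n =>
    (memLp_one_iff_integrable.2 hgi).exists_boundedContinuous_eLpNorm_sub_le ENNReal.one_ne_top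
      (by simp)
  choose f hf hfm using hex
  have hlim : Tendsto (fun n => eLpNorm (⇑(f n) - g) 1 (μ + ν)) atTop (𝓝 0) := by
    refine tendsto_of_tendsto_of_tendsto_of_le_of_le tendsto_const_nhds
      (h := fun n : ℕ => (n + 1 : ℝ≥0∞)⁻¹) ?_ (fun _ => zero_le) fun n => ?_
    · have := (tendsto_add_atTop_iff_nat 1).2 ENNReal.tendsto_inv_nat_nhds_zero
      simpa using this
    · show eLpNorm (⇑(f n) - g) 1 (μ + ν) ≤ _
      rw [eLpNorm_sub_comm]; exact hf n
  obtain ⟨ns, -, hns⟩ := (tendstoInMeasure_of_tendsto_eLpNorm one_ne_zero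
    (fun n => (f n).continuous.measurable.aestronglyMeasurable)
    hg.aestronglyMeasurable hlim).exists_seq_tendsto_ae
  have hK0 : 0 ≤ K := by
    have : Nonempty α := nonempty_of_isProbabilityMeasure μ
    exact (abs_nonneg _).trans (hK (Classical.arbitrary α))
  have hclip : ∀ x, max (-K) (min K (g x)) = g x := fun x => by
    rw [min_eq_right (abs_le.1 (hK x)).2, max_eq_right (abs_le.1 (hK x)).1]
  have hc : ∀ n, Continuous fun x => max (-K) (min K (f (ns n) x)) := fun n =>
    continuous_const.max (continuous_const.min (f (ns n)).continuous)
  have hb : ∀ n x, |max (-K) (min K (f (ns n) x))| ≤ K := fun n x =>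
    abs_le.2 ⟨le_max_left _ _, max_le (by linarith) (min_le_left _ _)⟩
  have hae : ∀ᵐ x ∂(μ + ν),
      Tendsto (fun n => max (-K) (min K (f (ns n) x))) atTop (𝓝 (g x)) := by
    filter_upwards [hns] with x hx
    have := (tendsto_const_nhds (x := -K)).max ((tendsto_const_nhds (x := K)).min hx)
    rwa [hclip] at this
  obtain ⟨ha, hb'⟩ := ae_add_measure_iff.1 hae
  exact dv_of_tendsto μ ν M K g _ (fun n => (hc n).measurable) hb ha hb'
    fun n => h _ (hc n) ⟨K, hb n⟩

/-- The hard half of the Donsker–Varadhan variational formula. Absolute continuity comes from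
large multiples of indicators of `ν`-null sets. The density `f = dμ/dν` is then truncated between
`1/(n+3)` and `n+3`, the inequality is applied to the logarithm `log (c n)` of the truncation, and
Fatou's lemma lets `n → ∞`. The cutoff `n+3 ≥ e` keeps the truncated integrand `F n` nonnegative. -/
lemma klDiv_le_of_dv {α : Type*} [MeasurableSpace α]
    (μ ν : Measure α) [IsProbabilityMeasure μ] [IsProbabilityMeasure ν] (M : ℝ)
    (h : ∀ g : α → ℝ, Measurable g → (∃ K, ∀ x, |g x| ≤ K) →
      ∫ x, g x ∂μ ≤ M + Real.log (∫ x, Real.exp (g x) ∂ν)) :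
    InformationTheory.klDiv μ ν ≤ ENNReal.ofReal M := by
  have hac : μ ≪ ν := by
    refine Measure.AbsolutelyContinuous.mk fun s hs hs0 => ?_
    by_contra hne
    have hpos : 0 < μ.real s := ENNReal.toReal_pos hne (measure_ne_top _ _)
    -- a large multiple of the indicator of `s` violates the inequality
    obtain ⟨t, ht⟩ := exists_gt (M / μ.real s)
    have h1 := h (s.indicator fun _ => t) (measurable_const.indicator hs)
      ⟨|t|, fun x => by by_cases hx : x ∈ s <;> simp [hx]⟩
    have h2 : ∫ x, Real.exp (s.indicator (fun _ => t) x) ∂ν = 1 := by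
      have : (fun x => Real.exp (s.indicator (fun _ => t) x)) =ᵐ[ν] fun _ => 1 := by
        filter_upwards [measure_eq_zero_iff_ae_notMem.1 hs0] with x hx
        simp [hx]
      rw [integral_congr_ae this]; simp
    rw [h2, integral_indicator_const _ hs] at h1
    rw [div_lt_iff₀ hpos] at ht
    simp only [smul_eq_mul, Real.log_one, add_zero] at h1
    linarith
  set f : α → ℝ := fun x => (μ.rnDeriv ν x).toReal with hf
  have hfm : Measurable f := (Measure.measurable_rnDeriv μ ν).ennreal_toReal
  have hf0 : ∀ x, 0 ≤ f x := fun x => ENNReal.toReal_nonneg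
  have hfi : Integrable f ν := Measure.integrable_toReal_rnDeriv
  set c : ℕ → α → ℝ := fun n x => max (min (f x) (n + 3)) ((n + 3 : ℝ)⁻¹) with hc
  have hn0 : ∀ n : ℕ, (0 : ℝ) < (n + 3 : ℝ)⁻¹ := fun n => by positivity
  have hcpos : ∀ n x, 0 < c n x := fun n x => lt_max_of_lt_right (hn0 n)
  have hinv : ∀ n : ℕ, (n + 3 : ℝ)⁻¹ ≤ n + 3 := fun n => by
    have : (1 : ℝ) ≤ n + 3 := by linarith [n.cast_nonneg (α := ℝ)]
    exact (inv_le_one_of_one_le₀ this).trans this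
  have hcle : ∀ n x, c n x ≤ n + 3 := fun n x => max_le (min_le_right _ _) (hinv n)
  have hcm : ∀ n, Measurable (c n) := fun n => (hfm.min measurable_const).max measurable_const
  have hlogm : ∀ n, Measurable fun x => Real.log (c n x) := fun n => (hcm n).log
  have hlogb : ∀ n x, |Real.log (c n x)| ≤ Real.log (n + 3) := fun n x => by
    refine abs_le.2 ⟨?_, Real.log_le_log (hcpos n x) (hcle n x)⟩
    rw [← Real.log_inv]
    exact Real.log_le_log (hn0 n) (le_max_right _ _)
  -- the truncated version of `klFun ∘ f`
  set F : ℕ → α → ℝ := fun n x => f x * Real.log (c n x) + 1 - f x with hF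
  have hF0 : ∀ n x, 0 ≤ F n x := fun n x => by
    have h3 : Real.exp 1 ≤ (n + 3 : ℝ) := by
      linarith [Real.exp_one_lt_d9, n.cast_nonneg (α := ℝ)]
    rcases le_total (f x) (n + 3) with hle | hle
    · have hfc : f x ≤ c n x := by
        simp only [hc, min_eq_left hle]; exact le_max_left _ _
      rcases (hf0 x).eq_or_lt with h0 | h0
      · simp [hF, ← h0]
      · have h4 := InformationTheory.klFun_nonneg (hf0 x)
        rw [InformationTheory.klFun_apply] at h4
        have h5 := mul_le_mul_of_nonneg_left (Real.log_le_log h0 hfc) (hf0 x)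
        simp only [hF]; linarith
    · have h4 : c n x = n + 3 := by
        simp only [hc, min_eq_right hle, max_eq_left (hinv n)]
      have h5 : 1 ≤ Real.log (c n x) := by
        rw [h4, Real.le_log_iff_exp_le (by positivity)]; exact h3
      have h6 := mul_le_mul_of_nonneg_left h5 (hf0 x)
      simp only [hF]; linarith
  have hFm : ∀ n, Measurable (F n) := fun n =>
    ((hfm.mul (hlogm n)).add measurable_const).sub hfm
  have hflog : ∀ n, Integrable (fun x => f x * Real.log (c n x)) ν := fun n =>
    hfi.mul_bdd (c := Real.log (n + 3)) (hlogm n).aestronglyMeasurable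
      (ae_of_all _ fun x => by simpa using hlogb n x)
  have hint : ∀ n, ∫⁻ x, ENNReal.ofReal (F n x) ∂ν
      ≤ ENNReal.ofReal (M + Real.log (1 + (n + 3 : ℝ)⁻¹)) := fun n => by
    have hFi : Integrable (F n) ν := ((hflog n).add (integrable_const 1)).sub hfi
    rw [← ofReal_integral_eq_lintegral_ofReal hFi (ae_of_all _ (hF0 n))]
    refine ENNReal.ofReal_le_ofReal ?_
    have h1 : ∫ x, F n x ∂ν = ∫ x, Real.log (c n x) ∂μ := by
      have e1 : ∫ x, f x ∂ν = 1 := by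
        rw [hf, Measure.integral_toReal_rnDeriv hac]; simp
      have e2 : ∫ x, F n x ∂ν = ∫ x, f x * Real.log (c n x) ∂ν + 1 - ∫ x, f x ∂ν := by
        have := integral_sub ((hflog n).add (integrable_const (μ := ν) (1 : ℝ))) hfi
        simp only [Pi.add_apply] at this
        rw [hF, this, integral_add (hflog n) (integrable_const _)]; simp
      rw [e2, e1, integral_toReal_rnDeriv_mul hac]; ring
    rw [h1]
    refine (h _ (hlogm n) ⟨_, hlogb n⟩).trans ?_
    have h2 : ∀ x, Real.exp (Real.log (c n x)) = c n x := fun x => Real.exp_log (hcpos n x)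
    simp only [h2]
    have hci : Integrable (c n) ν := Integrable.of_bound (hcm n).aestronglyMeasurable (n + 3)
      (ae_of_all _ fun x => by
        rw [Real.norm_eq_abs, abs_of_pos (hcpos n x)]; exact hcle n x)
    have h3 : ∫ x, c n x ∂ν ≤ 1 + (n + 3 : ℝ)⁻¹ := by
      calc ∫ x, c n x ∂ν ≤ ∫ x, (f x + (n + 3 : ℝ)⁻¹) ∂ν := by
            refine integral_mono hci (hfi.add (integrable_const _)) fun x => ?_
            refine max_le ?_ ?_
            · linarith [min_le_left (f x) (n + 3), hn0 n]
            · linarith [hf0 x]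
        _ = 1 + (n + 3 : ℝ)⁻¹ := by
            rw [integral_add hfi (integrable_const _), hf, Measure.integral_toReal_rnDeriv hac]
            simp
    have h4 : 0 < ∫ x, c n x ∂ν := by
      have := integral_mono (μ := ν) (integrable_const ((n + 3 : ℝ)⁻¹)) hci
        (fun x => le_max_right _ _)
      refine (hn0 n).trans_le ?_
      simpa using this
    linarith [Real.log_le_log h4 h3]
  have hlim0 : Tendsto (fun n : ℕ => (n + 3 : ℝ)⁻¹) atTop (𝓝 0) := by
    have := (tendsto_add_atTop_iff_nat 3).2 (tendsto_inv_atTop_nhds_zero_nat (𝕜 := ℝ))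
    simpa using this
  have hlim : Tendsto (fun n : ℕ => ENNReal.ofReal (M + Real.log (1 + (n + 3 : ℝ)⁻¹))) atTop
      (𝓝 (ENNReal.ofReal M)) := by
    refine ENNReal.tendsto_ofReal ?_
    have := ((hlim0.const_add 1).log (by norm_num)).const_add M
    simpa using this
  have hFlim : ∀ x, Tendsto (fun n => ENNReal.ofReal (F n x)) atTop
      (𝓝 (ENNReal.ofReal (InformationTheory.klFun (f x)))) := fun x => by
    refine ENNReal.tendsto_ofReal ?_
    rcases (hf0 x).eq_or_lt with h0 | h0
    · simp [hF, ← h0, InformationTheory.klFun_zero]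
    · have hcl : Tendsto (fun n => c n x) atTop (𝓝 (f x)) := by
        have e1 : Tendsto (fun n : ℕ => min (f x) (n + 3 : ℝ)) atTop (𝓝 (f x)) := by
          refine tendsto_const_nhds.congr' ?_
          filter_upwards [eventually_ge_atTop ⌈f x⌉₊] with n hn
          have := Nat.ceil_le.1 hn
          rw [min_eq_left (by linarith)]
        have := e1.max hlim0
        rwa [max_eq_left (hf0 x)] at this
      have := (((hcl.log h0.ne').const_mul (f x)).add_const 1).sub_const (f x)
      simpa [InformationTheory.klFun_apply] using this
  rw [InformationTheory.klDiv_eq_lintegral_klFun_of_ac hac]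
  calc ∫⁻ x, ENNReal.ofReal (InformationTheory.klFun (μ.rnDeriv ν x).toReal) ∂ν
      = ∫⁻ x, liminf (fun n => ENNReal.ofReal (F n x)) atTop ∂ν :=
        lintegral_congr fun x => (hFlim x).liminf_eq.symm
    _ ≤ liminf (fun n => ∫⁻ x, ENNReal.ofReal (F n x) ∂ν) atTop :=
        lintegral_liminf_le fun n => (hFm n).ennreal_ofReal
    _ ≤ liminf (fun n : ℕ => ENNReal.ofReal (M + Real.log (1 + (n + 3 : ℝ)⁻¹))) atTop :=
        liminf_le_liminf (Eventually.of_forall hint)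
    _ = ENNReal.ofReal M := hlim.liminf_eq

/-! ### Feller kernels -/

lemma integrable_of_continuous {X : Type*} [TopologicalSpace X] [CompactSpace X]
    [MeasurableSpace X] [OpensMeasurableSpace X] (μ : Measure X) [IsFiniteMeasure μ]
    {f : X → ℝ} (hf : Continuous f) : Integrable f μ :=
  (BoundedContinuousFunction.mkOfCompact ⟨f, hf⟩).integrable μ

lemma exists_bound_of_continuous {X : Type*} [TopologicalSpace X] [CompactSpace X]
    {f : X → ℝ} (hf : Continuous f) : ∃ K, ∀ x, |f x| ≤ K :=
  ⟨‖(⟨f, hf⟩ : C(X, ℝ))‖, fun x => (⟨f, hf⟩ : C(X, ℝ)).norm_coe_le_norm x⟩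

lemma measurable_of_feller {X : Type*} [MetricSpace X] [CompactSpace X]
    [MeasurableSpace X] [BorelSpace X]
    (P : X → Measure X) (hP : ∀ x, IsProbabilityMeasure (P x))
    (hFeller : ∀ f : C(X, ℝ), Continuous fun x => ∫ y, f y ∂(P x)) : Measurable P := by
  refine .measure_of_isPiSystem_of_isProbabilityMeasure
    (BorelSpace.measurable_eq.trans borel_eq_generateFrom_isClosed) isPiSystem_isClosed
    fun F hF => ?_
  have hF : IsClosed F := hF
  have hpos : ∀ n : ℕ, (0 : ℝ) < 1 / (n + 1) := fun n => by positivity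
  have hreal : Measurable fun x => (P x).real F := by
    refine measurable_of_tendsto_metrizable
      (f := fun (n : ℕ) x => ∫ y, (thickenedIndicator (hpos n) F y : ℝ) ∂(P x)) (fun n => ?_)
      (tendsto_pi_nhds.2 fun x => tendsto_integral_thickenedIndicator_of_isClosed (P x) hF hpos
        tendsto_one_div_add_atTop_nhds_zero_nat)
    exact (hFeller ⟨fun y => (thickenedIndicator (hpos n) F y : ℝ),
      NNReal.continuous_coe.comp (thickenedIndicator (hpos n) F).continuous⟩).measurable
  have : (fun x => P x F) = fun x => ENNReal.ofReal ((P x).real F) := by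
    funext x; rw [ofReal_measureReal]
  rw [this]
  exact hreal.ennreal_ofReal

/-- Joint form of the Feller property, for integrands depending on a parameter. -/
lemma continuous_integral_of_feller {X Z : Type*} [MetricSpace X] [CompactSpace X]
    [MeasurableSpace X] [BorelSpace X] [TopologicalSpace Z]
    (P : X → Measure X) (hP : ∀ x, IsProbabilityMeasure (P x))
    (hFeller : ∀ f : C(X, ℝ), Continuous fun x => ∫ y, f y ∂(P x))
    (h : Z × X → ℝ) (hh : Continuous h) (b : Z → X) (hb : Continuous b) :
    Continuous fun z => ∫ y, h (z, y) ∂(P (b z)) := by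
  let H : C(Z, C(X, ℝ)) := ContinuousMap.curry ⟨h, hh⟩
  have hHi : ∀ z x, Integrable (H z) (P x) := fun z x => integrable_of_continuous _ (H z).continuous
  refine continuous_iff_continuousAt.2 fun z₀ => ?_
  have h1 : Tendsto (fun z => ∫ y, (H z y - H z₀ y) ∂(P (b z))) (𝓝 z₀) (𝓝 0) := by
    have hn : Tendsto (fun z => ‖H z - H z₀‖) (𝓝 z₀) (𝓝 0) :=
      tendsto_iff_norm_sub_tendsto_zero.1 (H.continuous.tendsto z₀)
    refine squeeze_zero_norm (fun z => ?_) hn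
    have := norm_integral_le_of_norm_le_const (μ := P (b z)) (C := ‖H z - H z₀‖)
      (ae_of_all _ fun y => (H z - H z₀).norm_coe_le_norm y)
    simpa using this
  have h2 : Tendsto (fun z => ∫ y, H z₀ y ∂(P (b z))) (𝓝 z₀) (𝓝 (∫ y, H z₀ y ∂(P (b z₀)))) :=
    ((hFeller (H z₀)).comp hb).tendsto z₀
  have h3 := h1.add h2
  rw [zero_add] at h3
  refine h3.congr fun z => ?_
  rw [integral_sub (hHi _ _) (hHi _ _), sub_add_cancel]
  rfl

/-! ### Words and stationarity -/

/-- The last `n + 1` letters of a past trajectory. -/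
def pastWord {X : Type*} (n : ℕ) (p : { m : ℤ // m ≤ 0 } → X) : Fin (n + 1) → X :=
  fun i => p ⟨(i : ℕ) - (n : ℤ), by have := i.2; omega⟩

/-- A past trajectory with the given last `n + 1` letters; earlier letters repeat the first letter
of the word. -/
def wordPast {X : Type*} (n : ℕ) (w : Fin (n + 1) → X) : { m : ℤ // m ≤ 0 } → X :=
  fun i => w ⟨(i.1 + n).toNat, by have := i.2; omega⟩

lemma wordPast_pastWord {X : Type*} (n : ℕ) (p : { m : ℤ // m ≤ 0 } → X)
    (i : { m : ℤ // m ≤ 0 }) (hi : -(n : ℤ) ≤ i.1) : wordPast n (pastWord n p) i = p i := by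
  simp only [wordPast, pastWord]
  congr 1
  ext
  simp only
  omega

lemma pastWord_last {X : Type*} (n : ℕ) (p : { m : ℤ // m ≤ 0 } → X) :
    pastWord n p (Fin.last n) = p ⟨0, le_refl 0⟩ := by
  simp [pastWord]

lemma continuous_pastWord {X : Type*} [TopologicalSpace X] (n : ℕ) :
    Continuous (pastWord n : ({ m : ℤ // m ≤ 0 } → X) → Fin (n + 1) → X) :=
  continuous_pi fun _ => continuous_apply _

lemma continuous_wordPast {X : Type*} [TopologicalSpace X] (n : ℕ) :
    Continuous (wordPast n : (Fin (n + 1) → X) → { m : ℤ // m ≤ 0 } → X) :=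
  continuous_pi fun _ => continuous_apply _

lemma continuous_wordPush {X : Type*} [TopologicalSpace X] (n : ℕ) :
    Continuous fun z : (Fin (n + 1) → X) × X => wordPush z.1 z.2 :=
  Continuous.finSnoc (continuous_pi fun i => (continuous_apply i.succ).comp continuous_fst)
    continuous_snd

lemma map_shift {X : Type*} [MeasurableSpace X] (Lam : Measure (ℤ → X))
    (h : Measure.map (fun (ω : ℤ → X) (n : ℤ) => ω (n + 1)) Lam = Lam) (m : ℤ) :
    Measure.map (fun (ω : ℤ → X) (n : ℤ) => ω (n + m)) Lam = Lam := by
  have hm : ∀ m : ℤ, Measurable fun (ω : ℤ → X) (n : ℤ) => ω (n + m) := fun m =>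
    measurable_pi_lambda _ fun _ => measurable_pi_apply _
  have hcomp : ∀ a b : ℤ, Measure.map (fun (ω : ℤ → X) (n : ℤ) => ω (n + a))
      (Measure.map (fun (ω : ℤ → X) (n : ℤ) => ω (n + b)) Lam)
      = Measure.map (fun (ω : ℤ → X) (n : ℤ) => ω (n + (a + b))) Lam := fun a b => by
    rw [Measure.map_map (hm a) (hm b)]
    congr 1
    funext ω n
    simp [add_assoc]
  induction m using Int.induction_on with
  | zero => simp
  | succ k ih => rw [← hcomp, h, ih]
  | pred k ih =>
    have h2 := hcomp (-(k : ℤ) - 1) 1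
    rw [h, sub_add_cancel, ih] at h2
    exact h2

/-- Word marginals of the stationary law may be read off at any position `m`. -/
lemma integral_word {X : Type*} [MeasurableSpace X]
    (lam : Measure (ℕ → X)) (Lam : Measure (ℤ → X))
    (hshiftZ : Measure.map (fun (ω : ℤ → X) (n : ℤ) => ω (n + 1)) Lam = Lam)
    (hproj : Measure.map (fun (ω : ℤ → X) (n : ℕ) => ω (n : ℤ)) Lam = lam)
    (n : ℕ) (F : (Fin (n + 1) → X) → ℝ) (hF : Measurable F) (m : ℤ) :
    ∫ x, F x ∂(Measure.map (fun (ω : ℕ → X) (i : Fin (n + 1)) => ω (i : ℕ)) lam)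
      = ∫ ω, F (fun i => ω ((i : ℕ) + m)) ∂Lam := by
  have h1 : Measurable fun (ω : ℕ → X) (i : Fin (n + 1)) => ω (i : ℕ) :=
    measurable_pi_lambda _ fun _ => measurable_pi_apply _
  have h2 : Measurable fun (ω : ℤ → X) (n : ℕ) => ω (n : ℤ) :=
    measurable_pi_lambda _ fun _ => measurable_pi_apply _
  have h3 : Measurable fun (ω : ℤ → X) (n : ℤ) => ω (n + m) :=
    measurable_pi_lambda _ fun _ => measurable_pi_apply _
  rw [← hproj, ← map_shift Lam hshiftZ m, Measure.map_map h2 h3, Measure.map_map h1 (h2.comp h3),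
    integral_map (h1.comp (h2.comp h3)).aemeasurable hF.aestronglyMeasurable,
    map_shift Lam hshiftZ m]
  rfl

/-! ### Iterates of the Feynman–Kac operator -/

lemma continuous_FKword {X : Type*} [MetricSpace X] [CompactSpace X]
    [MeasurableSpace X] [BorelSpace X]
    (P : X → Measure X) (hP : ∀ x, IsProbabilityMeasure (P x))
    (hFeller : ∀ f : C(X, ℝ), Continuous fun x => ∫ y, f y ∂(P x)) {n : ℕ}
    (V u : (Fin (n + 1) → X) → ℝ) (hV : Continuous V) (hu : Continuous u) :
    Continuous (FKword P V u) :=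
  continuous_integral_of_feller P hP hFeller
    (fun z => Real.exp (V (wordPush z.1 z.2)) * u (wordPush z.1 z.2))
    (((hV.comp (continuous_wordPush n)).rexp).mul (hu.comp (continuous_wordPush n)))
    (fun x => x (Fin.last n)) (continuous_apply _)

lemma FKword_iterate {X : Type*} [MetricSpace X] [CompactSpace X]
    [MeasurableSpace X] [BorelSpace X]
    (P : X → Measure X) (hP : ∀ x, IsProbabilityMeasure (P x))
    (hFeller : ∀ f : C(X, ℝ), Continuous fun x => ∫ y, f y ∂(P x)) {n : ℕ}
    (V : (Fin (n + 1) → X) → ℝ) (hV : Continuous V) (k : ℕ) :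
    Continuous ((FKword P V)^[k] fun _ => 1) ∧ ∀ x, 0 < (FKword P V)^[k] (fun _ => 1) x := by
  induction k with
  | zero => exact ⟨continuous_const, fun _ => one_pos⟩
  | succ k ih =>
    obtain ⟨hc, hpos⟩ := ih
    rw [Function.iterate_succ_apply']
    refine ⟨continuous_FKword P hP hFeller V _ hV hc, fun x => ?_⟩
    set u := (FKword P V)^[k] fun _ => 1
    have hpush : Continuous fun y => wordPush x y :=
      (continuous_wordPush n).comp (Continuous.prodMk_right x)
    have hp : ∀ y, 0 < Real.exp (V (wordPush x y)) * u (wordPush x y) := fun y =>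
      mul_pos (Real.exp_pos _) (hpos _)
    refine (integral_pos_iff_support_of_nonneg (fun y => (hp y).le)
      (integrable_of_continuous _ ((hV.comp hpush).rexp.mul (hc.comp hpush)))).2 ?_
    have : (Function.support fun y => Real.exp (V (wordPush x y)) * u (wordPush x y))
        = Set.univ := Set.eq_univ_of_forall fun y => (hp y).ne'
    rw [this]
    simp

/-! ### The two inequalities -/

/-- One-step entropy inequality `∫ f dλ ≤ D + ∫ log (P e^f) dλ` for a function `f` of words: the
entropy inequality is applied to `f - log (P e^f)`, a function of the past and the next letter whose
exponential has integral one under `ρ.fst ⊗ η`. -/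
lemma integral_word_le {X : Type*} [MetricSpace X] [CompactSpace X]
    [MeasurableSpace X] [BorelSpace X]
    (P : X → Measure X) (hP : ∀ x, IsProbabilityMeasure (P x))
    (hFeller : ∀ f : C(X, ℝ), Continuous fun x => ∫ y, f y ∂(P x))
    (lam : Measure (ℕ → X)) (Lam : Measure (ℤ → X))
    (hshiftZ : Measure.map (fun (ω : ℤ → X) (n : ℤ) => ω (n + 1)) Lam = Lam)
    (hproj : Measure.map (fun (ω : ℤ → X) (n : ℕ) => ω (n : ℤ)) Lam = lam)
    (ρ : Measure (({ n : ℤ // n ≤ 0 } → X) × X)) [IsProbabilityMeasure ρ]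
    (hρ : ρ = Measure.map
      (fun ω : ℤ → X => ((fun p : { n : ℤ // n ≤ 0 } => ω p.1), ω 1)) Lam)
    (η : Kernel ({ n : ℤ // n ≤ 0 } → X) X) [IsMarkovKernel η]
    (hη : ∀ p, η p = P (p ⟨0, le_refl 0⟩))
    (hfin : InformationTheory.klDiv ρ (ρ.fst.compProd η) ≠ ⊤)
    (n : ℕ) (f : (Fin (n + 1) → X) → ℝ) (hf : Continuous f) :
    ∫ x, f x ∂(Measure.map (fun (ω : ℕ → X) (i : Fin (n + 1)) => ω (i : ℕ)) lam)
      ≤ (InformationTheory.klDiv ρ (ρ.fst.compProd η)).toReal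
        + ∫ x, Real.log (∫ y, Real.exp (f (wordPush x y)) ∂(P (x (Fin.last n))))
          ∂(Measure.map (fun (ω : ℕ → X) (i : Fin (n + 1)) => ω (i : ℕ)) lam) := by
  have hpair : Measurable
      (fun ω : ℤ → X => ((fun p : { n : ℤ // n ≤ 0 } => ω p.1), ω 1)) :=
    (measurable_pi_lambda _ fun _ => measurable_pi_apply _).prodMk (measurable_pi_apply _)
  set I : (Fin (n + 1) → X) → ℝ :=
    fun x => ∫ y, Real.exp (f (wordPush x y)) ∂(P (x (Fin.last n))) with hI
  have hpush := continuous_wordPush (X := X) n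
  have hexpi : ∀ x, Integrable (fun y => Real.exp (f (wordPush x y))) (P (x (Fin.last n))) :=
    fun x => integrable_of_continuous _
      (hf.comp (hpush.comp (Continuous.prodMk_right x))).rexp
  have hIpos : ∀ x, 0 < I x := fun x => integral_exp_pos (hexpi x)
  have hIc : Continuous I := continuous_integral_of_feller P hP hFeller
    (fun z => Real.exp (f (wordPush z.1 z.2))) (hf.comp hpush).rexp _ (continuous_apply _)
  have hlc : Continuous fun x => Real.log (I x) := hIc.log fun x => (hIpos x).ne'
  have hjoin : Continuous fun z : ({ m : ℤ // m ≤ 0 } → X) × X =>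
      wordPush (pastWord n z.1) z.2 :=
    hpush.comp (((continuous_pastWord n).comp continuous_fst).prodMk continuous_snd)
  have hg1 : Continuous fun z : ({ m : ℤ // m ≤ 0 } → X) × X =>
      f (wordPush (pastWord n z.1) z.2) := hf.comp hjoin
  have hg2 : Continuous fun z : ({ m : ℤ // m ≤ 0 } → X) × X =>
      Real.log (I (pastWord n z.1)) := hlc.comp ((continuous_pastWord n).comp continuous_fst)
  have hg : Continuous fun z : ({ m : ℤ // m ≤ 0 } → X) × X =>
      f (wordPush (pastWord n z.1) z.2) - Real.log (I (pastWord n z.1)) := hg1.sub hg2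
  obtain ⟨K, hK⟩ := exists_bound_of_continuous hg
  have key := integral_le_klDiv_add_log ρ (ρ.fst.compProd η) hfin _ hg.measurable K hK
  rw [integral_sub (integrable_of_continuous ρ hg1) (integrable_of_continuous ρ hg2)] at key
  -- the subtracted term normalizes the exponential integral
  have hone : ∫ z, Real.exp (f (wordPush (pastWord n z.1) z.2) - Real.log (I (pastWord n z.1)))
      ∂(ρ.fst.compProd η) = 1 := by
    rw [Measure.integral_compProd (integrable_of_continuous _ hg.rexp)]
    have : ∀ p : { m : ℤ // m ≤ 0 } → X,
        ∫ y, Real.exp (f (wordPush (pastWord n p) y) - Real.log (I (pastWord n p))) ∂(η p) = 1 := by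
      intro p
      simp only [Real.exp_sub, Real.exp_log (hIpos _)]
      rw [integral_div, hη, ← pastWord_last n p]
      exact div_self (hIpos _).ne'
    simp [this]
  have e1 : ∫ z, f (wordPush (pastWord n z.1) z.2) ∂ρ
      = ∫ x, f x ∂(Measure.map (fun (ω : ℕ → X) (i : Fin (n + 1)) => ω (i : ℕ)) lam) := by
    -- the joined word occupies the times `1 - n, …, 1`
    rw [integral_word lam Lam hshiftZ hproj n f hf.measurable (1 - n), hρ,
      integral_map hpair.aemeasurable hg1.measurable.aestronglyMeasurable]
    refine integral_congr_ae (ae_of_all _ fun ω => ?_)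
    refine congrArg f (funext fun i => ?_)
    refine Fin.lastCases ?_ (fun j => ?_) i
    · simp [wordPush]
    · simp only [wordPush, Fin.snoc_castSucc, pastWord, Fin.val_succ, Fin.val_castSucc]
      congr 1
      push_cast
      ring
  have e2 : ∫ z, Real.log (I (pastWord n z.1)) ∂ρ
      = ∫ x, Real.log (I x)
        ∂(Measure.map (fun (ω : ℕ → X) (i : Fin (n + 1)) => ω (i : ℕ)) lam) := by
    rw [integral_word lam Lam hshiftZ hproj n _ hlc.measurable (-n), hρ,
      integral_map hpair.aemeasurable hg2.measurable.aestronglyMeasurable]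
    rfl
  rw [hone, Real.log_one, add_zero, e1, e2] at key
  linarith

/-- A one-step inequality with constant `D` for all continuous `f` bounds `⟨V, σ⟩ - Q(V)` by `D`: with
`u_k = 𝔓_k^V 𝟙` it is applied to `f = V + log u_k`, for which `P e^f = u_{k+1}`, so the sum over `k`
telescopes. -/
lemma word_functional_le {X : Type*} [MetricSpace X] [CompactSpace X]
    [MeasurableSpace X] [BorelSpace X]
    (P : X → Measure X) (hP : ∀ x, IsProbabilityMeasure (P x))
    (hFeller : ∀ f : C(X, ℝ), Continuous fun x => ∫ y, f y ∂(P x))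
    (n : ℕ) (V : C((Fin (n + 1) → X), ℝ)) (q D : ℝ)
    (hq : TendstoUniformly
        (fun (k : ℕ) (x : Fin (n + 1) → X) =>
          (k : ℝ)⁻¹ * Real.log ((FKword P ⇑V)^[k] (fun _ => 1) x))
        (fun _ => q) atTop)
    (σ : Measure (Fin (n + 1) → X)) [IsProbabilityMeasure σ]
    (hstep : ∀ f : (Fin (n + 1) → X) → ℝ, Continuous f → ∫ x, f x ∂σ
      ≤ D + ∫ x, Real.log (∫ y, Real.exp (f (wordPush x y)) ∂(P (x (Fin.last n)))) ∂σ) :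
    ∫ x, V x ∂σ - q ≤ D := by
  have hu := FKword_iterate P hP hFeller V V.continuous
  have hlog : ∀ k, Continuous fun x => Real.log ((FKword P V)^[k] (fun _ => 1) x) := fun k =>
    (hu k).1.log fun x => ((hu k).2 x).ne'
  have hsum : ∀ k : ℕ, k * ∫ x, V x ∂σ
      ≤ k * D + ∫ x, Real.log ((FKword P V)^[k] (fun _ => 1) x) ∂σ := by
    intro k
    induction k with
    | zero => simp
    | succ k ih =>
      have h1 := hstep _ (V.continuous.add (hlog k))
      simp only [Pi.add_apply] at h1
      rw [integral_add (integrable_of_continuous σ V.continuous)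
        (integrable_of_continuous σ (hlog k))] at h1
      have h2 : ∀ x, ∫ y, Real.exp (V (wordPush x y)
            + Real.log ((FKword P V)^[k] (fun _ => 1) (wordPush x y))) ∂(P (x (Fin.last n)))
          = (FKword P V)^[k + 1] (fun _ => 1) x := fun x => by
        rw [Function.iterate_succ_apply']
        simp only [Real.exp_add, Real.exp_log ((hu k).2 _)]
        rfl
      simp only [h2] at h1
      push_cast
      linarith
  refine le_of_forall_pos_le_add fun ε hε => ?_
  have hev := Metric.tendstoUniformly_iff.1 hq ε hε
  obtain ⟨k, hk, hk1⟩ := (hev.and (eventually_ge_atTop 1)).exists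
  have hk0 : (0 : ℝ) < k := by exact_mod_cast hk1
  have h3 : ∫ x, Real.log ((FKword P V)^[k] (fun _ => 1) x) ∂σ ≤ k * (q + ε) := by
    have := integral_mono (integrable_of_continuous σ (hlog k))
      (integrable_const (μ := σ) (k * (q + ε))) fun x => by
        have h4 := hk x
        rw [Real.dist_eq, abs_sub_comm] at h4
        have h5 := (abs_lt.1 h4).2
        have h6 : (k : ℝ)⁻¹ * Real.log ((FKword P V)^[k] (fun _ => 1) x) ≤ q + ε := by linarith
        rwa [inv_mul_le_iff₀ hk0] at h6
    simpa using this
  have h7 : (k : ℝ) * ∫ x, V x ∂σ ≤ k * (D + (q + ε)) := by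
    linarith [hsum k]
  linarith [le_of_mul_le_mul_left h7 hk0]

/-- If `M` bounds every `⟨V, λ⟩ - Q(V)`, the Donsker–Varadhan inequality with constant `M` holds for
continuous functions `G` of the last `n + 1` letters and the next letter: after subtracting
`log ∫ e^G P(x₀, dy)` such a function becomes a word potential `V` with `𝔓₁^V 𝟙 = 𝟙`, so that
`Q(V) = 0`; Jensen's inequality does the rest. -/
lemma dv_cylinder {X : Type*} [MetricSpace X] [CompactSpace X]
    [MeasurableSpace X] [BorelSpace X]
    (P : X → Measure X) (hP : ∀ x, IsProbabilityMeasure (P x))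
    (hFeller : ∀ f : C(X, ℝ), Continuous fun x => ∫ y, f y ∂(P x))
    (Q : (n : ℕ) → C((Fin (n + 1) → X), ℝ) → ℝ)
    (hQ : ∀ (n : ℕ) (V : C((Fin (n + 1) → X), ℝ)),
      TendstoUniformly
        (fun (k : ℕ) (x : Fin (n + 1) → X) =>
          (k : ℝ)⁻¹ * Real.log ((FKword P ⇑V)^[k] (fun _ => 1) x))
        (fun _ => Q n V) atTop)
    (lam : Measure (ℕ → X)) (Lam : Measure (ℤ → X))
    (hshiftZ : Measure.map (fun (ω : ℤ → X) (n : ℤ) => ω (n + 1)) Lam = Lam)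
    (hproj : Measure.map (fun (ω : ℤ → X) (n : ℕ) => ω (n : ℤ)) Lam = lam)
    (ρ : Measure (({ n : ℤ // n ≤ 0 } → X) × X)) [IsProbabilityMeasure ρ]
    (hρ : ρ = Measure.map
      (fun ω : ℤ → X => ((fun p : { n : ℤ // n ≤ 0 } => ω p.1), ω 1)) Lam)
    (η : Kernel ({ n : ℤ // n ≤ 0 } → X) X) [IsMarkovKernel η]
    (hη : ∀ p, η p = P (p ⟨0, le_refl 0⟩)) (M : ℝ)
    (hM : ∀ (n : ℕ) (V : C((Fin (n + 1) → X), ℝ)),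
      ∫ x, V x ∂(Measure.map (fun (ω : ℕ → X) (i : Fin (n + 1)) => ω (i : ℕ)) lam) - Q n V ≤ M)
    (n : ℕ) (G : (Fin (n + 1) → X) × X → ℝ) (hG : Continuous G) :
    ∫ z, G (pastWord n z.1, z.2) ∂ρ
      ≤ M + Real.log (∫ z, Real.exp (G (pastWord n z.1, z.2)) ∂(ρ.fst.compProd η)) := by
  have hpair : Measurable
      (fun ω : ℤ → X => ((fun p : { n : ℤ // n ≤ 0 } => ω p.1), ω 1)) :=
    (measurable_pi_lambda _ fun _ => measurable_pi_apply _).prodMk (measurable_pi_apply _)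
  set I : (Fin (n + 1) → X) → ℝ := fun x => ∫ y, Real.exp (G (x, y)) ∂(P (x (Fin.last n))) with hI
  have hIpos : ∀ x, 0 < I x := fun x => integral_exp_pos
    (integrable_of_continuous _ (hG.comp (Continuous.prodMk_right x)).rexp)
  have hIc : Continuous I := continuous_integral_of_feller P hP hFeller
    (fun z => Real.exp (G z)) hG.rexp _ (continuous_apply _)
  have hlc : Continuous fun x => Real.log (I x) := hIc.log fun x => (hIpos x).ne'
  have hinit : Continuous fun w : Fin (n + 2) → X => (Fin.init w : Fin (n + 1) → X) :=
    continuous_pi fun i => continuous_apply _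
  let V : C((Fin (n + 2) → X), ℝ) :=
    ⟨fun w => G (Fin.init w, w (Fin.last _)) - Real.log (I (Fin.init w)),
      (hG.comp (hinit.prodMk (continuous_apply _))).sub (hlc.comp hinit)⟩
  have hFK : FKword P V (fun _ => 1) = fun _ => 1 := by
    funext x
    have h1 : ∀ y, V (wordPush x y) = G (Fin.tail x, y) - Real.log (I (Fin.tail x)) := fun y => by
      simp only [V, wordPush, ContinuousMap.coe_mk, Fin.init_snoc, Fin.snoc_last]
      rfl
    simp only [FKword, h1, mul_one, Real.exp_sub, Real.exp_log (hIpos _)]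
    rw [integral_div]
    exact div_self (hIpos (Fin.tail x)).ne'
  have hiter : ∀ k, (FKword P V)^[k] (fun _ => 1) = fun _ => 1 := fun k =>
    Function.iterate_fixed hFK k
  have hX : Nonempty (({ n : ℤ // n ≤ 0 } → X) × X) := nonempty_of_isProbabilityMeasure ρ
  have hQ0 : Q (n + 1) V = 0 := by
    have h1 := (hQ (n + 1) V).tendsto_at (fun _ => hX.some.2)
    simp only [hiter, Real.log_one, mul_zero] at h1
    exact tendsto_nhds_unique h1 tendsto_const_nhds |>.symm ▸ rfl
  have hg1 : Continuous fun z : ({ m : ℤ // m ≤ 0 } → X) × X => G (pastWord n z.1, z.2) :=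
    hG.comp (((continuous_pastWord n).comp continuous_fst).prodMk continuous_snd)
  have hl2 : Continuous fun p : { m : ℤ // m ≤ 0 } → X => Real.log (I (pastWord n p)) :=
    hlc.comp (continuous_pastWord n)
  have hI2 : Continuous fun p : { m : ℤ // m ≤ 0 } → X => I (pastWord n p) :=
    hIc.comp (continuous_pastWord n)
  have hl3 : Continuous fun z : ({ m : ℤ // m ≤ 0 } → X) × X =>
      Real.log (I (pastWord n z.1)) := hl2.comp continuous_fst
  have hg3 : Continuous fun z : ({ m : ℤ // m ≤ 0 } → X) × X =>
      G (pastWord n z.1, z.2) - Real.log (I (pastWord n z.1)) := hg1.sub hl3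
  have e1 : ∫ x, V x ∂(Measure.map (fun (ω : ℕ → X) (i : Fin (n + 1 + 1)) => ω (i : ℕ)) lam)
      = ∫ z, G (pastWord n z.1, z.2) ∂ρ - ∫ p, Real.log (I (pastWord n p)) ∂ρ.fst := by
    have h1 : ∫ p, Real.log (I (pastWord n p)) ∂ρ.fst = ∫ z, Real.log (I (pastWord n z.1)) ∂ρ :=
      integral_map measurable_fst.aemeasurable hl2.measurable.aestronglyMeasurable
    rw [h1, ← integral_sub (integrable_of_continuous _ hg1)
      (integrable_of_continuous _ hl3),
      integral_word lam Lam hshiftZ hproj (n + 1) V V.continuous.measurable (-n), hρ,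
      integral_map hpair.aemeasurable
        hg3.measurable.aestronglyMeasurable]
    refine integral_congr_ae (ae_of_all _ fun ω => ?_)
    have h2 : ω (((Fin.last (n + 1) : ℕ) : ℤ) + -(n : ℤ)) = ω 1 := by
      congr 1; simp
    simp only [V, ContinuousMap.coe_mk, h2]
    rfl
  have e2 : ∫ z, Real.exp (G (pastWord n z.1, z.2)) ∂(ρ.fst.compProd η)
      = ∫ p, I (pastWord n p) ∂ρ.fst := by
    rw [Measure.integral_compProd (integrable_of_continuous _ hg1.rexp)]
    refine integral_congr_ae (ae_of_all _ fun p => ?_)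
    simp only [hI, hη, pastWord_last]
  -- Jensen's inequality, from the tangent line of `log` at the mean `m`
  have hJ : ∫ p, Real.log (I (pastWord n p)) ∂ρ.fst
      ≤ Real.log (∫ p, I (pastWord n p) ∂ρ.fst) := by
    set m := ∫ p, I (pastWord n p) ∂ρ.fst with hm
    have hmpos : 0 < m := by
      rw [← e2]; exact integral_exp_pos (integrable_of_continuous _ hg1.rexp)
    have h1 := integral_mono (μ := ρ.fst) (integrable_of_continuous _ hl2)
      (g := fun p => (Real.log m - 1) + I (pastWord n p) / m)
      ((integrable_const _).add ((integrable_of_continuous _ hI2).div_const _)) fun p => by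
        have h2 := Real.log_le_sub_one_of_pos (div_pos (hIpos (pastWord n p)) hmpos)
        rw [Real.log_div (hIpos _).ne' hmpos.ne'] at h2
        simp only
        linarith
    rw [integral_add (integrable_const _) ((integrable_of_continuous _ hI2).div_const _),
      integral_div, ← hm, div_self hmpos.ne'] at h1
    simpa using h1
  have h3 := hM (n + 1) V
  rw [hQ0, e1] at h3
  rw [e2]
  linarith

/-- Donsker–Varadhan entropy formula for the level-3 rate function.
Suppose that for every `r ≥ 1` (here `r = n+1`) and every `V ∈ C(𝔛^r)` the limit
`𝐐^r(V) = lim_k (1/k) log (𝔓_k^V(r) 𝟙)(𝒙)` exists uniformly and independently of `𝒙`.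
Let `𝐈^r` be the Legendre transform of `𝐐^r` and `𝐈(λ) = sup_r 𝐈^r(Π^r_* λ)`.
Then, for every shift-invariant probability measure `λ` on `𝔛^{ℤ≥0}`, every shift-invariant
extension `Λ` to `𝔛^ℤ`, and every Markov kernel `κ` disintegrating the law `ρ` of
`(past, coordinate at time 1)` over its first marginal `λ₋ = ρ.fst` (this is the regular
conditional law `λ(𝒙,·)`), one has
`𝐈(λ) = ∫ Ent( λ(𝒙,·) | P₁(x₀,·) ) λ₋(d𝒙)`. -/
theorem stmt5
    {X : Type*} [MetricSpace X] [CompactSpace X] [Nonempty X]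
    [MeasurableSpace X] [BorelSpace X]
    (P : X → Measure X) (hP : ∀ x, IsProbabilityMeasure (P x))
    (hFeller : ∀ f : C(X, ℝ), Continuous fun x => ∫ y, f y ∂(P x))
    (Q : (n : ℕ) → C((Fin (n + 1) → X), ℝ) → ℝ)
    (hQ : ∀ (n : ℕ) (V : C((Fin (n + 1) → X), ℝ)),
      TendstoUniformly
        (fun (k : ℕ) (x : Fin (n + 1) → X) =>
          (k : ℝ)⁻¹ * Real.log ((FKword P ⇑V)^[k] (fun _ => 1) x))
        (fun _ => Q n V) atTop)
    (lam : Measure (ℕ → X)) [IsProbabilityMeasure lam]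
    (hshift : Measure.map (fun (ω : ℕ → X) (n : ℕ) => ω (n + 1)) lam = lam)
    (Lam : Measure (ℤ → X)) [IsProbabilityMeasure Lam]
    (hshiftZ : Measure.map (fun (ω : ℤ → X) (n : ℤ) => ω (n + 1)) Lam = Lam)
    (hproj : Measure.map (fun (ω : ℤ → X) (n : ℕ) => ω (n : ℤ)) Lam = lam)
    (ρ : Measure (({ n : ℤ // n ≤ 0 } → X) × X)) [IsProbabilityMeasure ρ]
    (hρ : ρ = Measure.map
      (fun ω : ℤ → X => ((fun p : { n : ℤ // n ≤ 0 } => ω p.1), ω 1)) Lam)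
    (κ : Kernel ({ n : ℤ // n ≤ 0 } → X) X) [IsMarkovKernel κ]
    (hκ : ρ.fst.compProd κ = ρ) :
    (⨆ n : ℕ, ⨆ V : C((Fin (n + 1) → X), ℝ),
        (((∫ x, V x ∂(Measure.map (fun (ω : ℕ → X) (i : Fin (n + 1)) => ω (i : ℕ)) lam))
            - Q n V : ℝ) : EReal)) =
      ((∫⁻ p, relEnt (κ p) (P (p ⟨0, le_refl 0⟩)) ∂ρ.fst : ℝ≥0∞) : EReal) := by
  have := hP
  let Pk : Kernel X X := ⟨P, measurable_of_feller P hP hFeller⟩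
  have hPk : IsMarkovKernel Pk := ⟨hP⟩
  have h0 : Measurable fun p : { n : ℤ // n ≤ 0 } → X => p ⟨0, le_refl 0⟩ := measurable_pi_apply _
  let η : Kernel ({ n : ℤ // n ≤ 0 } → X) X := Pk.comap _ h0
  have hη : ∀ p, η p = P (p ⟨0, le_refl 0⟩) := fun p => rfl
  have hRHS : ∫⁻ p, relEnt (κ p) (P (p ⟨0, le_refl 0⟩)) ∂ρ.fst
      = InformationTheory.klDiv ρ (ρ.fst.compProd η) := by
    have h1 := lintegral_klDiv_eq_klDiv_compProd ρ.fst κ η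
    rw [hκ] at h1
    rw [← h1]
    exact lintegral_congr fun p => relEnt_eq_klDiv _ _
  rw [hRHS]
  refine le_antisymm (iSup₂_le fun n V => ?_) ?_
  · by_cases hfin : InformationTheory.klDiv ρ (ρ.fst.compProd η) = ⊤
    · rw [hfin]; exact le_top
    have hm : Measurable fun (ω : ℕ → X) (i : Fin (n + 1)) => ω (i : ℕ) :=
      measurable_pi_lambda _ fun _ => measurable_pi_apply _
    have hσ := Measure.isProbabilityMeasure_map (μ := lam) hm.aemeasurable
    have hD : ((InformationTheory.klDiv ρ (ρ.fst.compProd η) : ℝ≥0∞) : EReal)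
        = (((InformationTheory.klDiv ρ (ρ.fst.compProd η)).toReal : ℝ) : EReal) := by
      rw [← EReal.toReal_coe_ennreal, EReal.coe_toReal (by simpa using hfin) (by simp)]
    rw [hD]
    exact EReal.coe_le_coe_iff.2 (word_functional_le P hP hFeller n V (Q n V) _ (hQ n V) _
      fun f hf => integral_word_le P hP hFeller lam Lam hshiftZ hproj ρ hρ η hη hfin n f hf)
  · set S : EReal := ⨆ n : ℕ, ⨆ V : C((Fin (n + 1) → X), ℝ),
        (((∫ x, V x ∂(Measure.map (fun (ω : ℕ → X) (i : Fin (n + 1)) => ω (i : ℕ)) lam))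
            - Q n V : ℝ) : EReal) with hS
    have hle : ∀ (n : ℕ) (V : C((Fin (n + 1) → X), ℝ)),
        (((∫ x, V x ∂(Measure.map (fun (ω : ℕ → X) (i : Fin (n + 1)) => ω (i : ℕ)) lam))
            - Q n V : ℝ) : EReal) ≤ S := fun n V => le_iSup₂_of_le n V le_rfl
    by_cases hSt : S = ⊤
    · rw [hSt]; exact le_top
    have hSb : S ≠ ⊥ := ne_bot_of_le_ne_bot (EReal.coe_ne_bot _) (hle 0 0)
    obtain ⟨M, hMS⟩ : ∃ M : ℝ, (M : EReal) = S := ⟨S.toReal, EReal.coe_toReal hSt hSb⟩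
    have hM : ∀ (n : ℕ) (V : C((Fin (n + 1) → X), ℝ)),
        ∫ x, V x ∂(Measure.map (fun (ω : ℕ → X) (i : Fin (n + 1)) => ω (i : ℕ)) lam)
          - Q n V ≤ M := fun n V => by
      have := hle n V
      rw [← hMS] at this
      exact EReal.coe_le_coe_iff.1 this
    have hcyl := dv_cylinder P hP hFeller Q hQ lam Lam hshiftZ hproj ρ hρ η hη M hM
    have hM0 : 0 ≤ M := by
      have := hcyl 0 (fun _ => 0) continuous_const
      simpa using this
    have hmain : InformationTheory.klDiv ρ (ρ.fst.compProd η) ≤ ENNReal.ofReal M := by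
      refine klDiv_le_of_dv _ _ M fun g hg ⟨K, hK⟩ => ?_
      refine dv_of_continuous _ _ M (fun g hg ⟨K, hK⟩ => ?_) g hg K hK
      -- a continuous function is the pointwise limit of its cylinder versions
      have htr : ∀ n : ℕ, Continuous fun w : (Fin (n + 1) → X) × X => g (wordPast n w.1, w.2) :=
        fun n => hg.comp (((continuous_wordPast n).comp continuous_fst).prodMk continuous_snd)
      have hlim : ∀ z : ({ m : ℤ // m ≤ 0 } → X) × X,
          Tendsto (fun n => g (wordPast n (pastWord n z.1), z.2)) atTop (𝓝 (g z)) := by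
        intro z
        refine (hg.tendsto z).comp (Tendsto.prodMk_nhds (tendsto_pi_nhds.2 fun i => ?_)
          tendsto_const_nhds)
        refine tendsto_const_nhds.congr' ?_
        filter_upwards [eventually_ge_atTop (-i.1).toNat] with n hn
        exact (wordPast_pastWord n z.1 i (by omega)).symm
      exact dv_of_tendsto _ _ M K g (fun n z => g (wordPast n (pastWord n z.1), z.2))
        (fun n => ((htr n).comp
          (((continuous_pastWord n).comp continuous_fst).prodMk continuous_snd)).measurable)
        (fun n z => hK _) (ae_of_all _ hlim) (ae_of_all _ hlim) fun n => hcyl n _ (htr n)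
    rw [← hMS]
    calc ((InformationTheory.klDiv ρ (ρ.fst.compProd η) : ℝ≥0∞) : EReal)
        ≤ ((ENNReal.ofReal M : ℝ≥0∞) : EReal) := EReal.coe_ennreal_le_coe_ennreal_iff.2 hmain
      _ = M := by rw [EReal.coe_ennreal_ofReal, max_eq_left hM0]
end

section
/- Assume Hypotheses (R) and (ACL), and assume in addition that ℰ is a separable Hilbert space. Then the local stabilisation property holds: for every R > 0, every compact set 𝒦' ⊂ ℰ, and every q ∈ (0,1), there exist a finite-dimensional subspace ℰ₁ ⊂ ℰ, constants C, δ > 0, and a continuous map Φ : 𝐃_δ × B_ℰ(R) → ℰ₁, continuously differentiable in η, such that for all (Υ,Υ') ∈ 𝐃_δ := {(Υ,Υ') ∈ 𝒳 × 𝒳 : d(Υ,Υ') ≤ δ} one has sup_{η ∈ B_ℰ(R)} ( ‖Φ(Υ,Υ',η)‖_ℰ + ‖D_ηΦ(Υ,Υ',η)‖ ) ≤ C · d(Υ,Υ') and sup_{η ∈ 𝒦'} d( S(Υ,η), S(Υ', η + Φ(Υ,Υ',η)) ) ≤ q · d(Υ,Υ'). -/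
/-!
Fix a state `Υ` and a control `η`, and let `B`, `A` be the derivatives of the lifted map `SL` in the
state and in the control, composed with `ι × id`. To first order, moving the state by `h` and the
control by `ζ` changes the image by `B h + A ζ`, so the map is squeezed by `ζ = Λ h` with `Λ` such
that `‖B + A Λ‖ ≤ q / 2`.

* At one point such a `Λ` exists with finite rank: `B` is compact, hence close to an operator with
  finite-dimensional range, and `A` has dense range (`exists_finiteRank_approx`).
* The set of admissible `Λ` is convex and, by continuity of `A` and `B`, the same `Λ` works for
  nearby points. Compactness and smooth cutoffs on the Hilbert space of controls then give a family
  `Λ (Υ, η)` with values in a fixed finite-dimensional space, continuous, and `C¹` in `η` with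
  bounded derivative (`exists_regular_selection`).
* `SL` is only a lift, but its derivative is periodic, so `A` and `B` are well defined and
  continuous on the torus (`exists_fderiv_descend`).

Finally `Φ Υ Υ' η = Λ (Υ, η) h`, where `h` is the small displacement from `Υ` to `Υ'` lifted to
`H × ℝ^d`; the nonlinear remainder is `o(‖h‖)` uniformly over the compact set of states and
controls (`exists_uniform_remainder`).
-/


open MeasureTheory Filter Topology Metric
open scoped ENNReal NNReal

noncomputable section

instance : Fact (0 < 2 * Real.pi) := ⟨by positivity⟩

/-- The `d`-dimensional torus `𝕋^d = ℝ^d / 2πℤ^d`. -/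
abbrev Torus (d : ℕ) : Type := Fin d → AddCircle (2 * Real.pi)

/-- The covering map `ℝ^d → 𝕋^d`. -/
def torusQuot (d : ℕ) (y : Fin d → ℝ) : Torus d := fun i => (y i : AddCircle (2 * Real.pi))

/-! ### Approximate right inverses of finite rank -/

/-- A bounded map of `V₀` into a Hilbert space that is compact is approximated in operator norm by
orthogonal projections of itself on finite-dimensional subspaces. -/
lemma exists_projection_approx {H V₀ : Type*} [NormedAddCommGroup H] [InnerProductSpace ℝ H]
    [NormedAddCommGroup V₀] [NormedSpace ℝ V₀] (ι : V₀ →L[ℝ] H)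
    (hι : ∀ s : Set V₀, Bornology.IsBounded s → IsCompact (closure (ι '' s)))
    {ε : ℝ} (hε : 0 < ε) :
    ∃ F : Submodule ℝ H, ∃ _ : FiniteDimensional ℝ F,
      ∀ v : V₀, ‖ι v - F.starProjection (ι v)‖ ≤ ε * ‖v‖ := by
  obtain ⟨t, -, ht, hcov⟩ := (hι (closedBall 0 1) isBounded_closedBall).finite_cover_balls hε
  have hfin : FiniteDimensional ℝ (Submodule.span ℝ t) := FiniteDimensional.span_of_finite ℝ ht
  refine ⟨Submodule.span ℝ t, hfin, ?_⟩
  set F := Submodule.span ℝ t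
  have key : ‖ι - F.starProjection ∘L ι‖ ≤ ε := by
    refine ContinuousLinearMap.opNorm_le_of_unit_norm hε.le fun v hv => ?_
    have h1 : ι v ∈ closure (ι '' closedBall 0 1) :=
      subset_closure ⟨v, by simp [hv], rfl⟩
    obtain ⟨k, hk, hvk⟩ := Set.mem_iUnion₂.1 (hcov h1)
    have hkF : k ∈ F := Submodule.subset_span hk
    have h2 : ‖ι v - F.starProjection (ι v)‖ ≤ ‖ι v - k‖ := by
      rw [Submodule.starProjection_minimal]
      exact ciInf_le ⟨0, by rintro _ ⟨x, rfl⟩; positivity⟩ (⟨k, hkF⟩ : F)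
    rw [mem_ball, dist_eq_norm] at hvk
    simpa using h2.trans hvk.le
  intro v
  simpa using (ι - F.starProjection ∘L ι).le_of_opNorm_le key v

/-- If `A` has dense range and `D` takes values in a space compactly embedded in the target, then
`A L + D` can be made small in operator norm by an operator `L` of finite rank. -/
lemma exists_finiteRank_approx {H V₀ Z E X : Type*} [NormedAddCommGroup H] [InnerProductSpace ℝ H]
    [NormedAddCommGroup V₀] [NormedSpace ℝ V₀] [NormedAddCommGroup Z] [NormedSpace ℝ Z]
    [FiniteDimensional ℝ Z] [NormedAddCommGroup E] [NormedSpace ℝ E]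
    [NormedAddCommGroup X] [NormedSpace ℝ X] (ι : V₀ →L[ℝ] H)
    (hι : ∀ s : Set V₀, Bornology.IsBounded s → IsCompact (closure (ι '' s)))
    (D : X →L[ℝ] V₀ × Z) (A : E →L[ℝ] H × Z) (hA : DenseRange A) {ε : ℝ} (hε : 0 < ε) :
    ∃ L : X →L[ℝ] E, ∃ E₁ : Submodule ℝ E, FiniteDimensional ℝ E₁ ∧ (∀ x, L x ∈ E₁) ∧
      ‖(ι.prodMap (ContinuousLinearMap.id ℝ Z)) ∘L D + A ∘L L‖ < ε := by
  obtain ⟨F, hF, hFι⟩ := exists_projection_approx ι hι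
    (ε := ε / (4 * (‖D‖ + 1))) (by positivity)
  let j : F × Z →L[ℝ] H × Z := F.subtypeL.prodMap (ContinuousLinearMap.id ℝ Z)
  let T : X →L[ℝ] F × Z :=
    ((F.orthogonalProjectionOnto ∘L ι).prodMap (ContinuousLinearMap.id ℝ Z)) ∘L D
  let b := Module.finBasis ℝ (F × Z)
  obtain ⟨C, hC, hCb⟩ := b.exists_opNorm_le (F := H × Z)
  have hM : 0 < ε / (4 * C * (‖T‖ + 1)) := by positivity
  choose ζ hζ using fun i => hA.exists_dist_lt (j (b i)) hM
  let G : F × Z →L[ℝ] E := LinearMap.toContinuousLinearMap (b.constr ℝ ζ)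
  have hGb : ∀ i, G (b i) = ζ i := fun i => b.constr_basis ℝ ζ i
  have hjG : ‖j - A ∘L G‖ ≤ C * (ε / (4 * C * (‖T‖ + 1))) := by
    refine hCb hM.le fun i => ?_
    have := (hζ i).le
    rw [dist_eq_norm] at this
    simpa [hGb] using this
  have hD : ‖(ι.prodMap (ContinuousLinearMap.id ℝ Z)) ∘L D - j ∘L T‖ ≤ ε / 4 := by
    refine ContinuousLinearMap.opNorm_le_bound _ (by positivity) fun x => ?_
    have h0 : ((ι.prodMap (ContinuousLinearMap.id ℝ Z)) ∘L D - j ∘L T) x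
        = (ι (D x).1 - F.starProjection (ι (D x).1), 0) := by
      ext <;> simp [j, T]
    have h1 : ‖(D x).1‖ ≤ ‖D‖ * ‖x‖ := (norm_fst_le _).trans (D.le_opNorm x)
    rw [h0, Prod.norm_mk, norm_zero, max_eq_left (norm_nonneg _)]
    calc ‖ι (D x).1 - F.starProjection (ι (D x).1)‖
        ≤ ε / (4 * (‖D‖ + 1)) * ‖(D x).1‖ := hFι _
      _ ≤ ε / (4 * (‖D‖ + 1)) * ((‖D‖ + 1) * ‖x‖) := by
          gcongr
          nlinarith [norm_nonneg x]
      _ = ε / 4 * ‖x‖ := by field_simp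
  refine ⟨-(G ∘L T), LinearMap.range (G : F × Z →ₗ[ℝ] E), inferInstance, fun x => ?_, ?_⟩
  · exact Submodule.neg_mem _ ⟨T x, rfl⟩
  · have h0 : (ι.prodMap (ContinuousLinearMap.id ℝ Z)) ∘L D + A ∘L (-(G ∘L T))
        = ((ι.prodMap (ContinuousLinearMap.id ℝ Z)) ∘L D - j ∘L T) + (j - A ∘L G) ∘L T := by
      ext x <;> simp [sub_eq_add_neg]
    rw [h0]
    calc ‖((ι.prodMap (ContinuousLinearMap.id ℝ Z)) ∘L D - j ∘L T) + (j - A ∘L G) ∘L T‖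
        ≤ ‖(ι.prodMap (ContinuousLinearMap.id ℝ Z)) ∘L D - j ∘L T‖ + ‖(j - A ∘L G) ∘L T‖ :=
          ContinuousLinearMap.opNorm_add_le _ _
      _ ≤ ε / 4 + C * (ε / (4 * C * (‖T‖ + 1))) * (‖T‖ + 1) := by
          refine add_le_add hD ((ContinuousLinearMap.opNorm_comp_le _ _).trans ?_)
          gcongr
          linarith
      _ = ε / 2 := by field_simp; ring
      _ < ε := by linarith

/-! ### Gluing local choices -/

/-- A smooth cutoff on a Hilbert space, with derivative bounded on bounded sets. -/
lemma exists_smooth_cutoff {E : Type*} [NormedAddCommGroup E] [InnerProductSpace ℝ E]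
    (c : E) {r : ℝ} (hr : 0 < r) (R : ℝ) :
    ∃ g : E → ℝ, ContDiff ℝ 1 g ∧ (∀ η, g η ∈ Set.Icc (0 : ℝ) 1) ∧
      (∀ η, dist η c ≤ r → g η = 1) ∧ (∀ η, 2 * r ≤ dist η c → g η = 0) ∧
      ∃ K, ∀ η ∈ closedBall (0 : E) R, ‖fderiv ℝ g η‖ ≤ K := by
  let a : E → ℝ := fun η => 2 - r⁻¹ ^ 2 * ‖η - c‖ ^ 2
  have ha : ContDiff ℝ 1 a :=
    contDiff_const.sub (contDiff_const.mul ((contDiff_id.sub contDiff_const).norm_sq ℝ))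
  have hτ : ContDiff ℝ 1 Real.smoothTransition := Real.smoothTransition.contDiff (n := 1)
  have hader : ∀ η, HasFDerivAt a (-(r⁻¹ ^ 2 • (2 • (innerSL ℝ) (η - c)))) η := by
    intro η
    have h1 := ((hasFDerivAt_id (𝕜 := ℝ) η).sub_const c).norm_sq
    have h2 := (h1.const_mul (r⁻¹ ^ 2)).const_sub 2
    simpa [a] using h2
  refine ⟨fun η => Real.smoothTransition (a η), hτ.comp ha,
    fun η => ⟨Real.smoothTransition.nonneg _, Real.smoothTransition.le_one _⟩, ?_, ?_, ?_⟩
  · intro η h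
    apply Real.smoothTransition.one_of_one_le
    rw [dist_eq_norm] at h
    have h1 : r⁻¹ * ‖η - c‖ ≤ 1 := by rw [inv_mul_le_iff₀ hr]; simpa using h
    have h2 : (r⁻¹ * ‖η - c‖) ^ 2 ≤ 1 := pow_le_one₀ (by positivity) h1
    simp only [a]; rw [mul_pow] at h2; linarith
  · intro η h
    apply Real.smoothTransition.zero_of_nonpos
    rw [dist_eq_norm] at h
    have h1 : 2 ≤ r⁻¹ * ‖η - c‖ := by rw [le_inv_mul_iff₀ hr]; linarith
    have h2 : 2 ^ 2 ≤ (r⁻¹ * ‖η - c‖) ^ 2 := pow_le_pow_left₀ (by norm_num) h1 2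
    simp only [a]; rw [mul_pow] at h2; linarith
  · -- On a bounded set `a` takes values in a compact interval, where `smoothTransition` has
    -- bounded derivative.
    obtain ⟨K, hK⟩ := (isCompact_Icc (a := 2 - r⁻¹ ^ 2 * (R + ‖c‖) ^ 2) (b := 2)).exists_bound_of_continuousOn
      (hτ.continuous_deriv le_rfl).continuousOn
    refine ⟨K * (r⁻¹ ^ 2 * (2 * (R + ‖c‖))), fun η hη => ?_⟩
    have hn : ‖η - c‖ ≤ R + ‖c‖ := by
      have := mem_closedBall_zero_iff.1 hη
      linarith [norm_sub_le η c]
    have hmem : a η ∈ Set.Icc (2 - r⁻¹ ^ 2 * (R + ‖c‖) ^ 2) 2 := by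
      constructor
      · simp only [a]; gcongr
      · simp only [a]; have : 0 ≤ r⁻¹ ^ 2 * ‖η - c‖ ^ 2 := by positivity
        linarith
    have h1 := ((hτ.differentiable one_ne_zero (a η)).hasDerivAt).comp_hasFDerivAt η (hader η)
    have h2 : fderiv ℝ (fun η => Real.smoothTransition (a η)) η = _ := h1.fderiv
    have hK0 : 0 ≤ K := (norm_nonneg _).trans (hK _ hmem)
    rw [h2, norm_smul, norm_neg, norm_smul, ← Nat.cast_smul_eq_nsmul ℝ, norm_smul, innerSL_apply_norm]
    have h3 : ‖(r⁻¹ ^ 2 : ℝ)‖ = r⁻¹ ^ 2 := Real.norm_of_nonneg (by positivity)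
    rw [h3]
    gcongr
    · exact hK _ hmem
    · simp

/-- Regularity of a family `Λ p η` of vectors depending on a parameter `p` and a point `η`: joint
continuity, continuous differentiability in `η`, and bounds on the value and on the derivative that
are uniform in `p` and in `η` in the ball of radius `R`. -/
def RegularFamily {P E F : Type*} [TopologicalSpace P] [NormedAddCommGroup E] [NormedSpace ℝ E]
    [NormedAddCommGroup F] [NormedSpace ℝ F] (R : ℝ) (Λ : P → E → F) : Prop :=
  Continuous (fun q : P × E => Λ q.1 q.2) ∧ (∀ p, ContDiff ℝ 1 (Λ p)) ∧
    ∃ K, ∀ p, ∀ η ∈ closedBall (0 : E) R, ‖Λ p η‖ ≤ K ∧ ‖fderiv ℝ (Λ p) η‖ ≤ K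

/-- Replacing a regular family by a constant vector near a given point `(p₀, η₀)`: the new family is
a convex combination `ψ L + (1 - ψ) Λ` with `ψ = 1` near the point and `ψ = 0` away from it. -/
lemma RegularFamily.glue {P E F : Type*} [PseudoMetricSpace P] [NormedAddCommGroup E]
    [InnerProductSpace ℝ E] [NormedAddCommGroup F] [NormedSpace ℝ F] {R : ℝ} {Λ : P → E → F}
    (hΛ : RegularFamily R Λ) (L : F) (p₀ : P) (η₀ : E) {r : ℝ} (hr : 0 < r) :
    ∃ ψ : P → E → ℝ, (∀ p η, ψ p η ∈ Set.Icc (0 : ℝ) 1) ∧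
      (∀ p η, dist p p₀ ≤ r → dist η η₀ ≤ r → ψ p η = 1) ∧
      (∀ p η, ψ p η ≠ 0 → dist p p₀ < 2 * r ∧ dist η η₀ < 2 * r) ∧
      RegularFamily R (fun p η => ψ p η • L + (1 - ψ p η) • Λ p η) := by
  obtain ⟨g, hg, hg01, hg1, hg0, K, hK⟩ := exists_smooth_cutoff η₀ hr R
  obtain ⟨hΛc, hΛd, M, hM⟩ := hΛ
  let f : P → ℝ := fun p => max 0 (min 1 (2 - dist p p₀ / r))
  have hfc : Continuous f := by fun_prop
  have hf01 : ∀ p, f p ∈ Set.Icc (0 : ℝ) 1 := fun p =>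
    ⟨le_max_left _ _, max_le zero_le_one (min_le_left _ _)⟩
  have hψ01 : ∀ p η, f p * g η ∈ Set.Icc (0 : ℝ) 1 := fun p η =>
    ⟨mul_nonneg (hf01 p).1 (hg01 η).1, mul_le_one₀ (hf01 p).2 (hg01 η).1 (hg01 η).2⟩
  refine ⟨fun p η => f p * g η, hψ01, ?_, ?_, ?_, ?_, ?_⟩
  · intro p η hp hη
    have h1 : dist p p₀ / r ≤ 1 := by rw [div_le_one hr]; exact hp
    have h2 : f p = 1 := by
      simp only [f]; rw [min_eq_left (by linarith), max_eq_right zero_le_one]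
    simp [h2, hg1 η hη]
  · intro p η h
    constructor
    · by_contra! h1
      apply h
      have h2 : 2 ≤ dist p p₀ / r := by rw [le_div_iff₀ hr]; exact h1
      have h3 : f p = 0 := by
        simp only [f]
        exact max_eq_left ((min_le_right _ _).trans (by linarith))
      simp [h3]
    · by_contra! h1
      exact h (by simp [hg0 η h1])
  · have := hg.continuous
    fun_prop
  · intro p
    have := hΛd p
    fun_prop
  · refine ⟨‖L‖ + M + K * ‖L‖ + M + K * M, fun p η hη => ?_⟩
    obtain ⟨hM1, hM2⟩ := hM p η hη
    have hM0 : 0 ≤ M := (norm_nonneg _).trans hM1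
    have hK1 := hK η hη
    have hK0 : 0 ≤ K := (norm_nonneg _).trans hK1
    obtain ⟨h0, h1⟩ := hψ01 p η
    have hn1 : ‖f p * g η‖ ≤ 1 := by rw [Real.norm_of_nonneg h0]; exact h1
    have hn2 : ‖1 - f p * g η‖ ≤ 1 := by
      rw [Real.norm_of_nonneg (by linarith)]; linarith
    constructor
    · calc _ ≤ ‖f p * g η‖ * ‖L‖ + ‖1 - f p * g η‖ * ‖Λ p η‖ := by
            refine (norm_add_le _ _).trans ?_
            rw [norm_smul, norm_smul]
        _ ≤ 1 * ‖L‖ + 1 * M := by gcongr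
        _ ≤ _ := by nlinarith [norm_nonneg L, mul_nonneg hK0 (norm_nonneg L), mul_nonneg hK0 hM0]
    · have d1 := (hg.differentiable one_ne_zero η).hasFDerivAt.const_mul (f p)
      have d2 := ((hΛd p).differentiable one_ne_zero η).hasFDerivAt
      have d3 := (d1.smul_const L).add ((d1.const_sub 1).smul d2)
      have hd1 : ‖f p • fderiv ℝ g η‖ ≤ K := by
        rw [norm_smul, Real.norm_of_nonneg (hf01 p).1]
        calc _ ≤ 1 * K := by gcongr; exact (hf01 p).2
          _ = K := one_mul K
      have h4 : fderiv ℝ (fun η => (f p * g η) • L + (1 - f p * g η) • Λ p η) η = _ := d3.fderiv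
      rw [h4]
      calc _ ≤ ‖(f p • fderiv ℝ g η)‖ * ‖L‖ + (‖1 - f p * g η‖ * ‖fderiv ℝ (Λ p) η‖
              + ‖f p • fderiv ℝ g η‖ * ‖Λ p η‖) := by
            refine (norm_add_le _ _).trans (add_le_add ?_ ((norm_add_le _ _).trans
              (add_le_add ?_ ?_)))
            · rw [ContinuousLinearMap.norm_smulRight_apply]
            · rw [norm_smul]
            · rw [ContinuousLinearMap.norm_smulRight_apply, norm_neg]
        _ ≤ K * ‖L‖ + (1 * M + K * M) := by gcongr
        _ ≤ _ := by nlinarith [norm_nonneg L]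

/-- Selection over a compact set `s`: if at every point of `s` some vector lying in one of the
subspaces `sub i` belongs to the convex sets `Q y` of all nearby points `y`, then there is a regular
selection of `Q` on `s`, with values in a single `sub i`. Such a selection is glued from finitely
many constants, one at a time, so no normalised partition of unity is needed. -/
lemma exists_regular_selection {P E F ℱ : Type*} [PseudoMetricSpace P] [NormedAddCommGroup E]
    [InnerProductSpace ℝ E] [NormedAddCommGroup F] [NormedSpace ℝ F]
    [SemilatticeSup ℱ] [OrderBot ℱ] (sub : ℱ → Submodule ℝ F) (hsub : Monotone sub)
    (R : ℝ) (s : Set (P × E)) (hs : IsCompact s) (Q : P × E → Set F) (hQ : ∀ x, Convex ℝ (Q x))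
    (hloc : ∀ x ∈ s, ∃ L : F, (∃ i, L ∈ sub i) ∧ ∀ᶠ y in 𝓝 x, L ∈ Q y) :
    ∃ Λ : P → E → F, RegularFamily R Λ ∧ (∃ i, ∀ p η, Λ p η ∈ sub i) ∧
      ∀ x ∈ s, Λ x.1 x.2 ∈ Q x := by
  have hloc' : ∀ x : P × E, ∃ L : F, ∃ r : ℝ, 0 < r ∧ (∃ i, L ∈ sub i) ∧
      (x ∈ s → ∀ y, dist y.1 x.1 < 2 * r → dist y.2 x.2 < 2 * r → L ∈ Q y) := by
    intro x
    by_cases hx : x ∈ s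
    · obtain ⟨L, hL, hLQ⟩ := hloc x hx
      obtain ⟨ε, hε, h⟩ := Metric.eventually_nhds_iff.1 hLQ
      refine ⟨L, ε / 2, by positivity, hL, fun _ y h1 h2 => h ?_⟩
      rw [Prod.dist_eq]
      exact max_lt (by linarith) (by linarith)
    · exact ⟨0, 1, one_pos, ⟨⊥, zero_mem _⟩, fun h => absurd h hx⟩
  choose L r hr hLi hLQ using hloc'
  obtain ⟨t, hts, hcov⟩ := hs.elim_nhds_subcover (fun x => ball x (r x))
    (fun x _ => ball_mem_nhds _ (hr x))
  suffices H : ∀ t : Finset (P × E), (∀ x ∈ t, x ∈ s) → ∃ Λ : P → E → F, RegularFamily R Λ ∧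
      (∃ i, ∀ p η, Λ p η ∈ sub i) ∧ ∀ y, (∃ x ∈ t, y ∈ ball x (r x)) → Λ y.1 y.2 ∈ Q y by
    obtain ⟨Λ, h1, h2, h3⟩ := H t hts
    refine ⟨Λ, h1, h2, fun y hy => h3 y ?_⟩
    simpa using hcov hy
  classical
  intro t
  induction t using Finset.induction_on with
  | empty =>
    intro _
    refine ⟨fun _ _ => 0, ⟨continuous_const, fun _ => contDiff_const, 0, fun p η _ => by simp⟩,
      ⟨⊥, fun _ _ => zero_mem _⟩, by simp⟩
  | insert x t hxt ih =>
    intro h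
    obtain ⟨Λ, h1, ⟨i, hi⟩, h3⟩ := ih fun y hy => h y (Finset.mem_insert_of_mem hy)
    obtain ⟨k, hk⟩ := hLi x
    obtain ⟨ψ, hψ01, hψ1, hψ0, hreg⟩ := h1.glue (L x) x.1 x.2 (hr x)
    refine ⟨_, hreg, ⟨i ⊔ k, fun p η => ?_⟩, fun y hy => ?_⟩
    · exact add_mem (Submodule.smul_mem _ _ (hsub le_sup_right hk))
        (Submodule.smul_mem _ _ (hsub le_sup_left (hi p η)))
    · have hxs := h x (Finset.mem_insert_self _ _)
      -- Either `ψ = 1`, or `ψ = 0`, or both vectors being combined lie in the convex set `Q y`.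
      by_cases hψe1 : ψ y.1 y.2 = 1
      · obtain ⟨ha, hb⟩ := hψ0 y.1 y.2 (by rw [hψe1]; exact one_ne_zero)
        simpa [hψe1] using hLQ x hxs y ha hb
      · have hΛy : Λ y.1 y.2 ∈ Q y := by
          obtain ⟨z, hz, hyz⟩ := hy
          rcases Finset.mem_insert.1 hz with rfl | hz
          · rw [mem_ball, Prod.dist_eq, max_lt_iff] at hyz
            exact absurd (hψ1 _ _ hyz.1.le hyz.2.le) hψe1
          · exact h3 y ⟨z, hz, hyz⟩
        by_cases hψe0 : ψ y.1 y.2 = 0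
        · simpa [hψe0] using hΛy
        · obtain ⟨ha, hb⟩ := hψ0 y.1 y.2 hψe0
          obtain ⟨c0, c1⟩ := hψ01 y.1 y.2
          exact hQ y (hLQ x hxs y ha hb) hΛy c0 (by linarith) (by ring)

/-! ### The torus -/

section Torus

variable {d : ℕ}

lemma isOpenQuotientMap_torusQuot : IsOpenQuotientMap (torusQuot d) :=
  IsOpenQuotientMap.piMap fun _ => QuotientAddGroup.isOpenQuotientMap_mk

lemma torusQuot_add (x y : Fin d → ℝ) : torusQuot d (x + y) = torusQuot d x + torusQuot d y := by
  ext i; simp [torusQuot]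

lemma torusQuot_sub (x y : Fin d → ℝ) : torusQuot d (x - y) = torusQuot d x - torusQuot d y := by
  ext i; simp [torusQuot]

lemma dist_torusQuot_le (x y : Fin d → ℝ) :
    dist (torusQuot d x) (torusQuot d y) ≤ ‖x - y‖ := by
  rw [dist_eq_norm, ← torusQuot_sub, pi_norm_le_iff_of_nonneg (norm_nonneg _)]
  intro i
  exact (QuotientAddGroup.norm_mk_le_norm).trans (norm_le_pi_norm (x - y) i)

/-- The lift of a point of the torus to the cube `(-π, π]^d`. -/
def torusLift (θ : Torus d) : Fin d → ℝ :=
  fun i => (AddCircle.equivIoc (2 * Real.pi) (-Real.pi) (θ i) : ℝ)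

lemma torusLift_mem (θ : Torus d) (i : Fin d) : torusLift θ i ∈ Set.Ioc (-Real.pi) Real.pi := by
  have h := (AddCircle.equivIoc (2 * Real.pi) (-Real.pi) (θ i)).2
  have e : -Real.pi + 2 * Real.pi = Real.pi := by ring
  exact ⟨h.1, h.2.trans_eq e⟩

lemma torusQuot_torusLift (θ : Torus d) : torusQuot d (torusLift θ) = θ := by
  ext i; exact AddCircle.coe_equivIoc

lemma norm_torusLift_apply (θ : Torus d) (i : Fin d) : ‖torusLift θ i‖ = ‖θ i‖ := by
  have h := torusLift_mem θ i
  have h1 := (AddCircle.norm_coe_eq_abs_iff (2 * Real.pi) (x := torusLift θ i)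
    (by positivity)).2 (by
      rw [abs_of_pos (by positivity : (0 : ℝ) < 2 * Real.pi), abs_le]
      constructor <;> linarith [h.1, h.2])
  have h2 : ((torusLift θ i : ℝ) : AddCircle (2 * Real.pi)) = θ i :=
    congrFun (torusQuot_torusLift θ) i
  rw [h2] at h1
  rw [h1, Real.norm_eq_abs]

lemma norm_torusLift (θ : Torus d) : ‖torusLift θ‖ = ‖θ‖ := by
  have := fun i => norm_torusLift_apply θ i
  simp only [Pi.norm_def]
  congr 1
  refine Finset.sup_congr rfl fun i _ => ?_
  exact NNReal.eq (this i)

lemma continuousAt_torusLift {θ : Torus d} (h : ‖θ‖ < Real.pi) : ContinuousAt torusLift θ := by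
  refine continuousAt_pi.2 fun i => ?_
  have hne : θ i ≠ ((-Real.pi : ℝ) : AddCircle (2 * Real.pi)) := by
    intro he
    have h1 := (AddCircle.norm_coe_eq_abs_iff (2 * Real.pi) (x := -Real.pi)
      (by positivity)).2 (by
        rw [abs_of_pos (by positivity : (0 : ℝ) < 2 * Real.pi), abs_neg, abs_of_pos Real.pi_pos]
        linarith)
    rw [← he, abs_neg, abs_of_pos Real.pi_pos] at h1
    linarith [norm_le_pi_norm θ i]
  have h1 := AddCircle.continuousAt_equivIoc (2 * Real.pi) (-Real.pi) hne
  exact (continuous_subtype_val.continuousAt.comp h1).comp (f := fun θ : Torus d => θ i)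
    (continuous_apply i).continuousAt

lemma exists_int_of_torusQuot_eq_zero {z : Fin d → ℝ} (h : torusQuot d z = 0) (i : Fin d) :
    ∃ n : ℤ, (n : ℝ) = z i / (2 * Real.pi) := by
  obtain ⟨n, hn⟩ := (AddCircle.coe_eq_zero_iff (2 * Real.pi)).1 (congrFun h i)
  refine ⟨n, ?_⟩
  rw [← hn, zsmul_eq_mul, mul_div_cancel_right₀ _ (by positivity)]

/-- A continuous map from a connected space to the kernel of `ℝ^d → 𝕋^d` is constant. -/
lemma eq_of_torusQuot_eq_zero {Y : Type*} [TopologicalSpace Y] [PreconnectedSpace Y]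
    {f : Y → Fin d → ℝ} (hf : Continuous f) (h : ∀ x, torusQuot d (f x) = 0) (x y : Y) :
    f x = f y := by
  ext i
  choose n hn using fun x => exists_int_of_torusQuot_eq_zero (h x) i
  have hc : Continuous n := by
    rw [Int.isClosedEmbedding_coe_real.isInducing.continuous_iff]
    have : (Int.cast ∘ n : Y → ℝ) = fun x => f x i / (2 * Real.pi) := funext hn
    rw [this]
    fun_prop
  have h1 := hn x
  rw [PreconnectedSpace.constant ‹_› hc (x := x) (y := y), hn y] at h1
  have := Real.pi_pos
  field_simp at h1
  exact h1.symm

/-- The displacement between two points of `H × 𝕋^d`, lifted to `H × ℝ^d` with torus component in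
`(-π, π]^d`. -/
def displacement {H : Type*} [NormedAddCommGroup H] (Υ Υ' : H × Torus d) : H × (Fin d → ℝ) :=
  (Υ'.1 - Υ.1, torusLift (Υ'.2 - Υ.2))

lemma norm_displacement {H : Type*} [NormedAddCommGroup H] (Υ Υ' : H × Torus d) :
    ‖displacement Υ Υ'‖ = dist Υ Υ' := by
  rw [dist_comm, Prod.dist_eq, dist_eq_norm, dist_eq_norm, ← norm_torusLift, displacement,
    Prod.norm_mk]

lemma continuousAt_displacement {H : Type*} [NormedAddCommGroup H]
    {z : (H × Torus d) × (H × Torus d)} (hz : dist z.1 z.2 ≤ 1) :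
    ContinuousAt (fun z : (H × Torus d) × (H × Torus d) => displacement z.1 z.2) z := by
  have hsmall : ‖z.2.2 - z.1.2‖ < Real.pi := by
    have h1 : dist z.1.2 z.2.2 ≤ dist z.1 z.2 := by rw [Prod.dist_eq]; exact le_max_right _ _
    rw [← dist_eq_norm, dist_comm]
    linarith [Real.pi_gt_three]
  have hc : Continuous fun z : (H × Torus d) × (H × Torus d) => z.2.2 - z.1.2 := by fun_prop
  have hL : ContinuousAt (fun z : (H × Torus d) × (H × Torus d) =>
      torusLift (z.2.2 - z.1.2)) z :=
    ContinuousAt.comp (f := fun z : (H × Torus d) × (H × Torus d) => z.2.2 - z.1.2)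
      (continuousAt_torusLift hsmall) hc.continuousAt
  have hF : Continuous fun z : (H × Torus d) × (H × Torus d) => z.2.1 - z.1.1 := by fun_prop
  exact hF.continuousAt.prodMk hL

end Torus

/-- The derivative of the lifted map `SL` descends to a continuous function on the torus: two lifts
of the same point differ by a period `c`, and `SL (p + c) - SL p` is constant in `p` because it
takes values in a discrete set. -/
lemma exists_fderiv_descend {H E V₀ : Type*} [NormedAddCommGroup H] [NormedSpace ℝ H]
    [NormedAddCommGroup E] [NormedSpace ℝ E] [NormedAddCommGroup V₀] [NormedSpace ℝ V₀] {d : ℕ}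
    (S : (H × Torus d) → E → (H × Torus d)) (ι : V₀ →L[ℝ] H) (hι_inj : Function.Injective ι)
    (SL : (H × (Fin d → ℝ)) × E → V₀ × (Fin d → ℝ))
    (hSL_compat : ∀ (u : H) (y : Fin d → ℝ) (η : E),
      S (u, torusQuot d y) η = (ι (SL ((u, y), η)).1, torusQuot d (SL ((u, y), η)).2))
    (hSL : ContDiff ℝ 1 SL) :
    ∃ N : (H × Torus d) × E → ((H × (Fin d → ℝ)) × E →L[ℝ] V₀ × (Fin d → ℝ)),
      Continuous N ∧ ∀ u y η, N ((u, torusQuot d y), η) = fderiv ℝ SL ((u, y), η) := by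
  have key : ∀ u y y' η, torusQuot d y = torusQuot d y' →
      fderiv ℝ SL ((u, y), η) = fderiv ℝ SL ((u, y'), η) := by
    intro u y y' η hy
    let c : (H × (Fin d → ℝ)) × E := ((0, y' - y), 0)
    have hper : ∀ p, ι (SL (p + c)).1 = ι (SL p).1 ∧
        torusQuot d (SL (p + c)).2 = torusQuot d (SL p).2 := by
      rintro ⟨⟨v, z⟩, e⟩
      have hz : torusQuot d (z + (y' - y)) = torusQuot d z := by
        rw [torusQuot_add, torusQuot_sub, hy, sub_self, add_zero]
      have h1 := hSL_compat v (z + (y' - y)) e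
      rw [hz, hSL_compat v z e, Prod.mk.injEq] at h1
      simpa [c] using ⟨h1.1.symm, h1.2.symm⟩
    have hconst : ∀ p, SL (p + c) = SL p + (SL c - SL 0) := by
      intro p
      have h2 : (SL (p + c)).2 - (SL p).2 = (SL (0 + c)).2 - (SL 0).2 := by
        refine eq_of_torusQuot_eq_zero (f := fun p => (SL (p + c)).2 - (SL p).2) ?_ ?_ p 0
        · have := hSL.continuous
          fun_prop
        · intro p
          rw [torusQuot_sub, (hper p).2, sub_self]
      have h3 : (SL (p + c)).1 = (SL p).1 := hι_inj (hper p).1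
      have h4 : (SL (0 + c)).1 = (SL 0).1 := hι_inj (hper 0).1
      rw [zero_add] at h2 h4
      refine Prod.ext ?_ ?_
      · simp [h3, h4]
      · simp only [Prod.snd_add, Prod.snd_sub]
        rw [← h2]; abel
    have h5 : ((u, y), η) + c = ((u, y'), η) := by simp [c]
    rw [← h5, ← fderiv_comp_add_right, funext hconst, fderiv_add_const]
  let π : (H × (Fin d → ℝ)) × E → (H × Torus d) × E :=
    Prod.map (Prod.map id (torusQuot d)) id
  have hπ : IsOpenQuotientMap π :=
    (IsOpenQuotientMap.id.prodMap isOpenQuotientMap_torusQuot).prodMap IsOpenQuotientMap.id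
  have hN : ∀ p, fderiv ℝ SL (Function.surjInv hπ.surjective (π p)) = fderiv ℝ SL p := by
    rintro ⟨⟨u, y⟩, η⟩
    have h1 := Function.surjInv_eq hπ.surjective (π ((u, y), η))
    obtain ⟨⟨⟨u', y'⟩, η'⟩, he⟩ : ∃ p, p = Function.surjInv hπ.surjective (π ((u, y), η)) :=
      ⟨_, rfl⟩
    rw [← he] at h1 ⊢
    simp only [π, Prod.map_apply, id_eq, Prod.mk.injEq] at h1
    obtain ⟨⟨rfl, h2⟩, rfl⟩ := h1
    exact key _ _ _ _ h2
  refine ⟨fun x => fderiv ℝ SL (Function.surjInv hπ.surjective x), ?_, fun u y η =>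
    hN ((u, y), η)⟩
  rw [hπ.isQuotientMap.continuous_iff]
  exact (hSL.continuous_fderiv one_ne_zero).congr fun p => (hN p).symm

/-! ### Local stabilisation -/

/-- A `C¹` map is uniformly close to its first-order expansion near a compact set. -/
lemma exists_uniform_remainder {X Y : Type*} [NormedAddCommGroup X] [NormedSpace ℝ X]
    [NormedAddCommGroup Y] [NormedSpace ℝ Y] {f : X → Y} (hf : ContDiff ℝ 1 f) {K : Set X}
    (hK : IsCompact K) {ε : ℝ} (hε : 0 < ε) :
    ∃ δ > 0, ∀ p ∈ K, ∀ k : X, ‖k‖ < δ → ‖f (p + k) - f p - fderiv ℝ f p k‖ ≤ ε * ‖k‖ := by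
  have h := hK.uniformContinuousAt_of_continuousAt (fderiv ℝ f)
    (fun a _ => (hf.continuous_fderiv one_ne_zero).continuousAt) (Metric.dist_mem_uniformity hε)
  obtain ⟨δ, hδ, hδs⟩ := Metric.mem_uniformity_dist.1 h
  refine ⟨δ, hδ, fun p hp k hk => ?_⟩
  have h1 := Convex.norm_image_sub_le_of_norm_fderiv_le' (𝕜 := ℝ) (f := f) (C := ε)
    (s := ball p δ) (x := p) (y := p + k) (φ := fderiv ℝ f p)
    (fun x _ => hf.differentiable one_ne_zero x) (fun x hx => ?_) (convex_ball _ _)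
    (mem_ball_self hδ) (by simpa [mem_ball, dist_eq_norm] using hk)
  · simpa using h1
  · have h2 := hδs (a := p) (b := x) (by rw [dist_comm]; exact hx) hp
    rw [← dist_eq_norm, dist_comm]
    exact (le_of_lt h2)

/-- The subspace of operators whose range lies in the span of a finite set. -/
def rangeIn (X E : Type*) [NormedAddCommGroup X] [NormedSpace ℝ X] [NormedAddCommGroup E]
    [NormedSpace ℝ E] (t : Finset E) : Submodule ℝ (X →L[ℝ] E) where
  carrier := {L | ∀ x, L x ∈ Submodule.span ℝ (t : Set E)}
  add_mem' h₁ h₂ x := add_mem (h₁ x) (h₂ x)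
  zero_mem' _ := zero_mem _
  smul_mem' c _ h x := Submodule.smul_mem _ c (h x)

/-- A family of controls `Λ`, of finite rank and regular, for which the linearised error
`B + A Λ` is small on a compact set. -/
lemma exists_regular_control {P X Y E : Type*} [PseudoMetricSpace P] [NormedAddCommGroup X]
    [NormedSpace ℝ X] [NormedAddCommGroup Y] [NormedSpace ℝ Y] [NormedAddCommGroup E]
    [InnerProductSpace ℝ E] (R : ℝ) (s : Set (P × E)) (hs : IsCompact s)
    (B : P × E → X →L[ℝ] Y) (A : P × E → E →L[ℝ] Y) (hB : Continuous B) (hA : Continuous A)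
    (ε : ℝ) (h : ∀ x ∈ s, ∃ L : X →L[ℝ] E, ∃ E₁ : Submodule ℝ E, FiniteDimensional ℝ E₁ ∧
      (∀ v, L v ∈ E₁) ∧ ‖B x + A x ∘L L‖ < ε) :
    ∃ Λ : P → E → X →L[ℝ] E, RegularFamily R Λ ∧
      (∃ E₁ : Submodule ℝ E, FiniteDimensional ℝ E₁ ∧ ∀ p η v, Λ p η v ∈ E₁) ∧
      ∀ x ∈ s, ‖B x + A x ∘L Λ x.1 x.2‖ ≤ ε := by
  classical
  let Q : P × E → Set (X →L[ℝ] E) := fun x => {L | ‖B x + A x ∘L L‖ ≤ ε}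
  have hQ : ∀ x, Convex ℝ (Q x) := by
    intro x L₁ h₁ L₂ h₂ a b ha hb hab
    have e : B x + A x ∘L (a • L₁ + b • L₂)
        = a • (B x + A x ∘L L₁) + b • (B x + A x ∘L L₂) := by
      have hb' : B x = (a + b) • B x := by rw [hab, one_smul]
      rw [ContinuousLinearMap.comp_add, ContinuousLinearMap.comp_smul,
        ContinuousLinearMap.comp_smul]
      nth_rewrite 1 [hb']
      module
    change ‖B x + A x ∘L (a • L₁ + b • L₂)‖ ≤ ε
    rw [e]
    refine (norm_add_le _ _).trans ?_
    rw [norm_smul, norm_smul, Real.norm_of_nonneg ha, Real.norm_of_nonneg hb]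
    calc _ ≤ a * ε + b * ε := by gcongr <;> assumption
      _ = ε := by rw [← add_mul, hab, one_mul]
  have hmono : Monotone (rangeIn X E) := fun t₁ t₂ h L hL x =>
    Submodule.span_mono (by exact_mod_cast h) (hL x)
  obtain ⟨Λ, hΛ, ⟨t, ht⟩, hΛQ⟩ :=
    exists_regular_selection (rangeIn X E) hmono R s hs Q hQ (by
      intro x hx
      obtain ⟨L, E₁, hE₁, hLE, hL⟩ := h x hx
      refine ⟨L, ?_, ?_⟩
      · obtain ⟨t, ht⟩ := (Submodule.fg_iff_finiteDimensional E₁).2 hE₁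
        exact ⟨t, fun x => by rw [ht]; exact hLE x⟩
      · have hc : Continuous fun y => ‖B y + A y ∘L L‖ :=
          (hB.add (hA.clm_comp continuous_const)).norm
        exact (hc.continuousAt.eventually_lt continuousAt_const hL).mono fun y hy => le_of_lt hy)
  exact ⟨Λ, hΛ, ⟨_, FiniteDimensional.span_finset ℝ t, ht⟩, hΛQ⟩

lemma norm_apply_add_fderivWithin_le {X E F : Type*} [NormedAddCommGroup E]
    [NormedSpace ℝ E] [NormedAddCommGroup F] [NormedSpace ℝ F] [NormedAddCommGroup X]
    [NormedSpace ℝ X] {Λ : E → X →L[ℝ] F} (hΛ : ContDiff ℝ 1 Λ) {R M : ℝ} (hR : 0 < R)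
    (hM : ∀ η ∈ closedBall (0 : E) R, ‖Λ η‖ ≤ M ∧ ‖fderiv ℝ Λ η‖ ≤ M) (v : X) {η : E}
    (hη : η ∈ closedBall (0 : E) R) :
    ‖Λ η v‖ + ‖fderivWithin ℝ (fun η => Λ η v) (closedBall (0 : E) R) η‖ ≤ 2 * M * ‖v‖ := by
  have hΦd : ContDiff ℝ 1 fun η => Λ η v := hΛ.clm_apply contDiff_const
  obtain ⟨hM1, hM2⟩ := hM η hη
  have hM0 : 0 ≤ M := (norm_nonneg _).trans hM1
  have hU : UniqueDiffWithinAt ℝ (closedBall (0 : E) R) η :=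
    uniqueDiffOn_convex (convex_closedBall _ _)
      ⟨0, ball_subset_interior_closedBall (mem_ball_self hR)⟩ η hη
  rw [fderivWithin_eq_fderiv hU (hΦd.differentiable one_ne_zero η)]
  have hder : ‖fderiv ℝ (fun η => Λ η v) η‖ ≤ M * ‖v‖ := by
    refine ContinuousLinearMap.opNorm_le_bound _ (by positivity) fun ζ => ?_
    have h1 := (hΛ.differentiable one_ne_zero η).hasFDerivAt.clm_apply (hasFDerivAt_const v η)
    rw [h1.fderiv]
    have h2 : ‖fderiv ℝ Λ η ζ v‖ ≤ M * ‖ζ‖ * ‖v‖ :=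
      ContinuousLinearMap.le_of_opNorm_le _ (ContinuousLinearMap.le_of_opNorm_le _ hM2 ζ) _
    calc _ = ‖fderiv ℝ Λ η ζ v‖ := by simp
      _ ≤ M * ‖ζ‖ * ‖v‖ := h2
      _ = _ := by ring
  have hval := ContinuousLinearMap.le_of_opNorm_le _ hM1 v
  linarith

/-- Under Hypotheses (R) and (ACL) (with `ℰ` a separable Hilbert space),
the local stabilisation property holds: for every `R > 0`, compact `𝒦' ⊂ ℰ` and
`q ∈ (0,1)` there are a finite-dimensional subspace `ℰ₁ ⊂ ℰ`, constants `C, δ > 0` and a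
map `Φ : 𝐃_δ × B_ℰ(R) → ℰ₁`, continuous and continuously differentiable in `η`,
satisfying the bound `‖Φ‖ + ‖D_ηΦ‖ ≤ C d(Υ,Υ')` and the squeezing estimate
`d(S(Υ,η), S(Υ', η + Φ(Υ,Υ',η))) ≤ q d(Υ,Υ')`. -/
theorem stmt9
    -- `H` is a separable Hilbert space
    {H : Type*} [NormedAddCommGroup H] [InnerProductSpace ℝ H] [CompleteSpace H]
    [SecondCountableTopology H] [MeasurableSpace H] [BorelSpace H]
    -- `E` (the space `ℰ`) is a separable Hilbert space
    {E : Type*} [NormedAddCommGroup E] [InnerProductSpace ℝ E] [CompleteSpace E]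
    [SecondCountableTopology E] [MeasurableSpace E] [BorelSpace E]
    -- `V₀` is a Banach space (compactly embedded in `H` via `ι`)
    {V₀ : Type*} [NormedAddCommGroup V₀] [NormedSpace ℝ V₀] [CompleteSpace V₀]
    (d : ℕ) (hd : 1 ≤ d)
    (S : (H × Torus d) → E → (H × Torus d))
    (hS_cont : Continuous fun p : (H × Torus d) × E => S p.1 p.2)
    (𝒜 : Set H) (h𝒜 : IsCompact 𝒜)
    -- Hypothesis (R)
    (ι : V₀ →L[ℝ] H) (hι_inj : Function.Injective ι)
    (hι_cpt : ∀ s : Set V₀, Bornology.IsBounded s → IsCompact (closure (ι '' s)))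
    (SL : (H × (Fin d → ℝ)) × E → V₀ × (Fin d → ℝ))
    (hSL_compat : ∀ (u : H) (y : Fin d → ℝ) (η : E),
      S (u, torusQuot d y) η = (ι (SL ((u, y), η)).1, torusQuot d (SL ((u, y), η)).2))
    (hSL_smooth : ContDiff ℝ 2 SL)
    (hSL_bdd : ∀ R : ℝ, ∃ MR : ℝ, ∀ p : (H × (Fin d → ℝ)) × E, ‖p‖ ≤ R →
      ‖SL p‖ + ‖fderiv ℝ SL p‖ + ‖iteratedFDeriv ℝ 2 SL p‖ ≤ MR)
    (hfix : ∃ Υb ∈ 𝒜 ×ˢ (Set.univ : Set (Torus d)), S Υb 0 = Υb) :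
    ∀ R : ℝ, 0 < R → ∀ 𝒦' : Set E, IsCompact 𝒦' →
      -- Hypothesis (ACL) for `η ∈ 𝒦'`
      (∀ u ∈ 𝒜, ∀ (y : Fin d → ℝ), ∀ η ∈ 𝒦',
        DenseRange (fun ζ : E =>
          ((ι ((fderiv ℝ (fun e => SL ((u, y), e)) η ζ).1),
            (fderiv ℝ (fun e => SL ((u, y), e)) η ζ).2) : H × (Fin d → ℝ)))) →
      ∀ q : ℝ, 0 < q → q < 1 →
      ∃ E₁ : Submodule ℝ E, FiniteDimensional ℝ E₁ ∧
      ∃ C : ℝ, 0 < C ∧ ∃ δ : ℝ, 0 < δ ∧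
      ∃ Φ : (H × Torus d) → (H × Torus d) → E → E,
        (∀ Υ Υ' η, Φ Υ Υ' η ∈ E₁) ∧
        ContinuousOn (fun p : ((H × Torus d) × (H × Torus d)) × E => Φ p.1.1 p.1.2 p.2)
          ({p : (H × Torus d) × (H × Torus d) |
              p.1 ∈ 𝒜 ×ˢ (Set.univ : Set (Torus d)) ∧
              p.2 ∈ 𝒜 ×ˢ (Set.univ : Set (Torus d)) ∧ dist p.1 p.2 ≤ δ} ×ˢ
            closedBall (0 : E) R) ∧
        ∀ Υ Υ' : H × Torus d,
          Υ ∈ 𝒜 ×ˢ (Set.univ : Set (Torus d)) →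
          Υ' ∈ 𝒜 ×ˢ (Set.univ : Set (Torus d)) →
          dist Υ Υ' ≤ δ →
          ContDiffOn ℝ 1 (Φ Υ Υ') (closedBall (0 : E) R) ∧
          (∀ η ∈ closedBall (0 : E) R,
            ‖Φ Υ Υ' η‖ + ‖fderivWithin ℝ (Φ Υ Υ') (closedBall (0 : E) R) η‖ ≤
              C * dist Υ Υ') ∧
          (∀ η ∈ 𝒦', dist (S Υ η) (S Υ' (η + Φ Υ Υ' η)) ≤ q * dist Υ Υ') := by
  intro R hR 𝒦' h𝒦' hACL q hq _
  let J : V₀ × (Fin d → ℝ) →L[ℝ] H × (Fin d → ℝ) :=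
    ι.prodMap (ContinuousLinearMap.id ℝ (Fin d → ℝ))
  have hSL1 : ContDiff ℝ 1 SL := hSL_smooth.of_le one_le_two
  obtain ⟨N, hN, hNSL⟩ := exists_fderiv_descend S ι hι_inj SL hSL_compat hSL1
  obtain ⟨R₀, hR₀⟩ := h𝒦'.isBounded.subset_closedBall (0 : E)
  set R' := max R R₀
  have h𝒦R : 𝒦' ⊆ closedBall (0 : E) R' :=
    hR₀.trans (closedBall_subset_closedBall (le_max_right _ _))
  let X := H × (Fin d → ℝ)
  let inl : X →L[ℝ] X × E := ContinuousLinearMap.inl ℝ X E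
  let inr : E →L[ℝ] X × E := ContinuousLinearMap.inr ℝ X E
  -- `B x` and `A x` are the partial derivatives in the state and in the control.
  let B : (H × Torus d) × E → (X →L[ℝ] X) := fun x => (J ∘L N x) ∘L inl
  let A : (H × Torus d) × E → (E →L[ℝ] X) := fun x => (J ∘L N x) ∘L inr
  have hB : Continuous B := by fun_prop
  have hA : Continuous A := by fun_prop
  have hlift : ∀ x : (H × Torus d) × E,
      N x = fderiv ℝ SL ((x.1.1, torusLift x.1.2), x.2) := by
    rintro ⟨⟨u, θ⟩, η⟩
    rw [← hNSL, torusQuot_torusLift]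
  let s : Set ((H × Torus d) × E) := (𝒜 ×ˢ Set.univ) ×ˢ 𝒦'
  have hs : IsCompact s := (h𝒜.prod isCompact_univ).prod h𝒦'
  obtain ⟨Λ, ⟨hΛc, hΛd, M, hM⟩, ⟨E₁, hE₁, hΛE⟩, hΛQ⟩ :=
    exists_regular_control R' s hs B A hB hA (q / 2) (by
      rintro x ⟨⟨hx1, -⟩, hx2⟩
      have hAx : DenseRange (A x) := by
        have h1 := hACL x.1.1 hx1 (torusLift x.1.2) x.2 hx2
        have h2 : HasFDerivAt (fun e => SL ((x.1.1, torusLift x.1.2), e)) ((N x) ∘L inr) x.2 := by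
          rw [hlift x]
          exact (hSL1.differentiable one_ne_zero _).hasFDerivAt.comp x.2
            (hasFDerivAt_prodMk_right _ _)
        rw [h2.fderiv] at h1
        exact h1
      exact exists_finiteRank_approx ι hι_cpt ((N x) ∘L inl) (A x) hAx (half_pos hq))
  have hM0 : 0 ≤ M := (norm_nonneg _).trans
    (hM (0, 0) 0 (mem_closedBall_self (hR.le.trans (le_max_left _ _)))).1
  -- Uniform first-order expansion over lifts in the cube `[-π, π]^d`.
  let cube : Set (Fin d → ℝ) := Set.univ.pi fun _ => Set.Icc (-Real.pi) Real.pi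
  have hcube : IsCompact cube := isCompact_univ_pi fun _ => isCompact_Icc
  have hε : 0 < q / (2 * (‖J‖ + 1) * (1 + M)) := by positivity
  obtain ⟨δ₁, hδ₁, hrem⟩ := exists_uniform_remainder hSL1 ((h𝒜.prod hcube).prod h𝒦') hε
  have hδ0 : 0 < δ₁ / (2 * (1 + M)) := by positivity
  refine ⟨E₁, hE₁, 2 * M + 1,
    by positivity, min 1 (δ₁ / (2 * (1 + M))), lt_min one_pos hδ0,
    fun Υ Υ' η => Λ Υ η (displacement Υ Υ'), fun Υ Υ' η => hΛE Υ η _, ?_, ?_⟩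
  · rintro ⟨z, η⟩ ⟨⟨-, -, hd1⟩, -⟩
    refine ContinuousAt.continuousWithinAt ?_
    have hD : ContinuousAt (fun p : ((H × Torus d) × (H × Torus d)) × E =>
        displacement p.1.1 p.1.2) (z, η) :=
      ContinuousAt.comp (g := fun z : (H × Torus d) × (H × Torus d) => displacement z.1 z.2)
        (f := Prod.fst) (x := (z, η)) (continuousAt_displacement (hd1.trans (min_le_left _ _)))
        continuousAt_fst
    have hΛ' : ContinuousAt (fun p : ((H × Torus d) × (H × Torus d)) × E =>
        Λ p.1.1 p.2) (z, η) :=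
      (hΛc.comp (by fun_prop : Continuous fun p : ((H × Torus d) × (H × Torus d)) × E =>
        (p.1.1, p.2))).continuousAt
    exact hΛ'.clm_apply hD
  · rintro Υ Υ' ⟨hΥ, -⟩ - hdist
    refine ⟨((hΛd Υ).clm_apply contDiff_const).contDiffOn, fun η hη => ?_, fun η hη => ?_⟩
    · have h1 := norm_apply_add_fderivWithin_le (hΛd Υ) hR (fun η hη =>
        hM Υ η (closedBall_subset_closedBall (le_max_left R R₀) hη)) (displacement Υ Υ') hη
      rw [norm_displacement] at h1
      exact h1.trans (mul_le_mul_of_nonneg_right (by linarith) dist_nonneg)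
    · obtain ⟨u, θ⟩ := Υ
      obtain ⟨u', θ'⟩ := Υ'
      set h := displacement (u, θ) (u', θ') with hh
      set ζ := Λ (u, θ) η h with hζ
      have hhd : ‖h‖ = dist (u, θ) (u', θ') := norm_displacement _ _
      have hζM : ‖ζ‖ ≤ M * ‖h‖ :=
        ContinuousLinearMap.le_of_opNorm_le _ (hM (u, θ) η (h𝒦R hη)).1 h
      have hk : ‖(h, ζ)‖ ≤ (1 + M) * ‖h‖ := by
        rw [Prod.norm_mk]
        refine max_le ?_ ?_ <;> nlinarith [norm_nonneg h, mul_nonneg hM0 (norm_nonneg h)]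
      have hkδ : ‖(h, ζ)‖ < δ₁ := by
        have h1 : ‖h‖ ≤ δ₁ / (2 * (1 + M)) := by rw [hhd]; exact hdist.trans (min_le_right _ _)
        calc _ ≤ (1 + M) * ‖h‖ := hk
          _ ≤ (1 + M) * (δ₁ / (2 * (1 + M))) := by gcongr
          _ = δ₁ / 2 := by field_simp
          _ < δ₁ := by linarith
      let p : X × E := ((u, torusLift θ), η)
      have hp : p ∈ (𝒜 ×ˢ cube) ×ˢ 𝒦' :=
        ⟨⟨hΥ, fun i _ => Set.Ioc_subset_Icc_self (torusLift_mem θ i)⟩, hη⟩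
      have hR1 := hrem p hp (h, ζ) hkδ
      have hS1 : S (u, θ) η = (ι (SL p).1, torusQuot d (SL p).2) := by
        rw [← hSL_compat, torusQuot_torusLift]
      have hS2 : S (u', θ') (η + ζ)
          = (ι (SL (p + (h, ζ))).1, torusQuot d (SL (p + (h, ζ))).2) := by
        have e1 : p + (h, ζ) = ((u', torusLift θ + torusLift (θ' - θ)), η + ζ) := by
          exact Prod.ext (Prod.ext (add_sub_cancel u u') rfl) rfl
        have e2 : torusQuot d (torusLift θ + torusLift (θ' - θ)) = θ' := by
          rw [torusQuot_add, torusQuot_torusLift, torusQuot_torusLift]; abel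
        rw [e1, ← hSL_compat, e2]
      have hSd : dist (S (u, θ) η) (S (u', θ') (η + ζ)) ≤ ‖J (SL (p + (h, ζ)) - SL p)‖ := by
        rw [hS1, hS2, dist_comm, Prod.dist_eq]
        refine max_le ?_ ?_
        · rw [dist_eq_norm]
          refine le_trans (le_of_eq ?_) (norm_fst_le _)
          simp [J]
        · refine (dist_torusQuot_le _ _).trans (le_trans (le_of_eq ?_) (norm_snd_le _))
          simp [J]
      have hlin : ‖J (fderiv ℝ SL p (h, ζ))‖ ≤ q / 2 * ‖h‖ := by
        have h1 : ‖B ((u, θ), η) + A ((u, θ), η) ∘L Λ (u, θ) η‖ ≤ q / 2 :=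
          hΛQ ((u, θ), η) ⟨⟨hΥ, trivial⟩, hη⟩
        have h2 := ContinuousLinearMap.le_of_opNorm_le _ h1 h
        have h3 : (B ((u, θ), η) + A ((u, θ), η) ∘L Λ (u, θ) η) h
            = J (fderiv ℝ SL p (h, ζ)) := by
          have h4 : ((h, ζ) : X × E) = inl h + inr ζ := by simp [inl, inr]
          rw [h4, map_add, map_add, ← hlift ((u, θ), η)]
          rfl
        rwa [h3] at h2
      rw [← hhd]
      calc dist (S (u, θ) η) (S (u', θ') (η + ζ))
          ≤ ‖J (SL (p + (h, ζ)) - SL p)‖ := hSd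
        _ = ‖J (fderiv ℝ SL p (h, ζ)) + J (SL (p + (h, ζ)) - SL p - fderiv ℝ SL p (h, ζ))‖ := by
            rw [← map_add]; congr 2; abel
        _ ≤ q / 2 * ‖h‖ + ‖J‖ * (q / (2 * (‖J‖ + 1) * (1 + M)) * ‖(h, ζ)‖) := by
            refine (norm_add_le _ _).trans (add_le_add hlin ((J.le_opNorm _).trans ?_))
            gcongr
        _ ≤ q / 2 * ‖h‖ + (‖J‖ + 1) * (q / (2 * (‖J‖ + 1) * (1 + M)) * ((1 + M) * ‖h‖)) := by
            gcongr
            linarith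
        _ = q * ‖h‖ := by field_simp; ring

end
end

section
/- Assume there are constants 0 < m ≤ M < ∞ such that m · ν(Γ) ≤ π_*(P(x,·))(Γ) ≤ M · ν(Γ) for every x ∈ X and every measurable Γ ⊂ Y. Then for every t ≥ 1 the measure λ_t admits a density ρ_t with respect to ν^{⊗t} satisfying m^t ≤ ρ_t(y) ≤ M^t for every y ∈ Y^t, and for any such density the entropy production in time t, σ_t(y₁,…,y_t) := log( ρ_t(y₁,…,y_t) / ρ_t(y_t,…,y₁) ), satisfies |σ_t(y₁,…,y_t)| ≤ t · log(M/m) for every (y₁,…,y_t) ∈ Y^t. -/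
/-!
The chain reaches its coordinate `x_{k+1}` from the past `(x₀, …, x_k)` through `P(x_k, ·)`, whose
image under `π` lies between `m·ν` and `M·ν` whatever `x_k` is. Integrating out the last coordinate
first, each step of the chain therefore costs one factor `m` below and one factor `M` above, so that
`m^t · ν^{⊗t} ≤ λ_t ≤ M^t · ν^{⊗t}` as measures (`obsLaw_le` and `le_obsLaw`, by induction on `t`).

A measure squeezed between two multiples of a probability measure is absolutely continuous with
respect to it, with a Radon–Nikodym derivative obeying the same bounds almost everywhere; clamping
it makes the bounds hold everywhere (`exists_density_of_squeeze`). The estimate for the entropy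
production is then pointwise: a quotient of two numbers in `[m^t, M^t]` has a logarithm of absolute
value at most `t · log (M/m)`.
-/

open MeasureTheory ProbabilityTheory
open scoped ENNReal

/-- The joint law of `(x₀, x₁, …, x_t)` for the Markov chain with transition kernel `P`
and initial law `M`. -/
noncomputable def jointLaw {X : Type*} [MeasurableSpace X] (P : Kernel X X)
    (M : Measure X) : (t : ℕ) → Measure (Fin (t + 1) → X)
  | 0 => Measure.map (fun x _ => x) M
  | t + 1 => (jointLaw P M t).bind
      (fun ω => Measure.map (Fin.snoc ω) (P (ω (Fin.last t))))

/-- `λ_{t+1}`: the law of `(π(x₁),…,π(x_{t+1}))` along the stationary Markov chain. -/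
noncomputable def lamT {X Y : Type*} [MeasurableSpace X] [MeasurableSpace Y]
    (P : Kernel X X) (M : Measure X) (π : X → Y) (t : ℕ) : Measure (Fin (t + 1) → Y) :=
  Measure.map (fun (ω : Fin (t + 2) → X) (i : Fin (t + 1)) => π (ω i.succ))
    (jointLaw P M (t + 1))

/-- The law of `(π(x₁), …, π(x_t))` along the chain. In contrast with `lamT`, the number `t` of
observations may be `0`, which gives the induction its trivial starting point. -/
noncomputable def obsLaw {X Y : Type*} [MeasurableSpace X] [MeasurableSpace Y]
    (P : Kernel X X) (M : Measure X) (π : X → Y) (t : ℕ) : Measure (Fin t → Y) :=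
  Measure.map (fun (ω : Fin (t + 1) → X) (i : Fin t) => π (ω i.succ)) (jointLaw P M t)

section Aux

variable {X Y : Type*} [MeasurableSpace X] [MeasurableSpace Y]

lemma measurable_snoc (t : ℕ) :
    Measurable (fun p : (Fin t → X) × X => (Fin.snoc p.1 p.2 : Fin (t + 1) → X)) := by
  refine measurable_pi_lambda _ fun i => ?_
  refine Fin.lastCases ?_ (fun j => ?_) i
  · simpa using measurable_snd
  · simpa [Function.comp_def] using (measurable_pi_apply j).comp measurable_fst

lemma measurable_snoc_right {t : ℕ} (z : Fin t → X) :
    Measurable (fun x : X => (Fin.snoc z x : Fin (t + 1) → X)) :=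
  (measurable_snoc t).comp (measurable_const.prodMk measurable_id)

/-- Appending one step of the chain is a measurable kernel; without this the `bind` in the
definition of `jointLaw` would carry a junk value. -/
lemma measurable_step (P : Kernel X X) [IsMarkovKernel P] (t : ℕ) :
    Measurable (fun ω : Fin (t + 1) → X =>
      Measure.map (fun x : X => (Fin.snoc ω x : Fin (t + 2) → X)) (P (ω (Fin.last t)))) := by
  refine Measure.measurable_of_measurable_coe _ fun S hS => ?_
  have hκ := Kernel.measurable_kernel_prodMk_left
    (κ := P.comap (fun ω : Fin (t + 1) → X => ω (Fin.last t)) (measurable_pi_apply _))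
    (measurable_snoc (X := X) (t + 1) hS)
  convert hκ using 2 with ω
  rw [Measure.map_apply (measurable_snoc_right ω) hS]
  rfl

instance isProbabilityMeasure_jointLaw (P : Kernel X X) [IsMarkovKernel P]
    (M : Measure X) [IsProbabilityMeasure M] (t : ℕ) : IsProbabilityMeasure (jointLaw P M t) := by
  induction t with
  | zero =>
    exact Measure.isProbabilityMeasure_map
      (measurable_pi_lambda _ fun _ => measurable_id).aemeasurable
  | succ t ih =>
    refine ⟨?_⟩
    rw [jointLaw, Measure.bind_apply MeasurableSet.univ (measurable_step P t).aemeasurable]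
    have h1 : ∀ ω : Fin (t + 1) → X,
        Measure.map (fun x : X => (Fin.snoc ω x : Fin (t + 2) → X)) (P (ω (Fin.last t)))
          Set.univ = 1 := by
      intro ω
      rw [Measure.map_apply (measurable_snoc_right ω) MeasurableSet.univ]
      simp
    simp [h1]

lemma measurable_obs {π : X → Y} (hπ : Measurable π) (t : ℕ) :
    Measurable (fun (ω : Fin (t + 1) → X) (i : Fin t) => π (ω i.succ)) :=
  measurable_pi_lambda _ fun _ => hπ.comp (measurable_pi_apply _)

/-- The law of `t + 1` observations, disintegrated over the trajectory up to time `t`. -/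
lemma obsLaw_succ_apply (P : Kernel X X) [IsMarkovKernel P] (M : Measure X)
    {π : X → Y} (hπ : Measurable π) (t : ℕ) {S : Set (Fin (t + 1) → Y)} (hS : MeasurableSet S) :
    obsLaw P M π (t + 1) S = ∫⁻ ω, Measure.map π (P (ω (Fin.last t)))
      {y | (Fin.snoc (fun i : Fin t => π (ω i.succ)) y : Fin (t + 1) → Y) ∈ S}
        ∂(jointLaw P M t) := by
  have hS' := measurable_obs hπ (t + 1) hS
  rw [obsLaw, Measure.map_apply (measurable_obs hπ (t + 1)) hS, jointLaw,
    Measure.bind_apply hS' (measurable_step P t).aemeasurable]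
  refine lintegral_congr fun ω => ?_
  rw [Measure.map_apply (measurable_snoc_right ω) hS',
    Measure.map_apply hπ (show MeasurableSet
      {y | (Fin.snoc (fun i : Fin t => π (ω i.succ)) y : Fin (t + 1) → Y) ∈ S} from
        measurable_snoc_right _ hS)]
  congr 1
  ext x
  simp only [Set.mem_preimage, Set.mem_ofPred_eq]
  have : (fun i : Fin (t + 1) => π ((Fin.snoc ω x : Fin (t + 2) → X) i.succ)) =
      (Fin.snoc (fun i : Fin t => π (ω i.succ)) (π x) : Fin (t + 1) → Y) := by
    funext i
    refine Fin.lastCases ?_ (fun j => ?_) i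
    · rw [Fin.succ_last, Fin.snoc_last, Fin.snoc_last]
    · rw [Fin.succ_castSucc, Fin.snoc_castSucc, Fin.snoc_castSucc]
  rw [this]

lemma measurable_section (ν : Measure Y) [IsProbabilityMeasure ν] (t : ℕ)
    {S : Set (Fin (t + 1) → Y)} (hS : MeasurableSet S) :
    Measurable (fun z : Fin t → Y => ν {y | (Fin.snoc z y : Fin (t + 1) → Y) ∈ S}) :=
  measurable_measure_prodMk_left (ν := ν) (measurable_snoc t hS)

lemma lintegral_obsLaw (P : Kernel X X) (M : Measure X)
    {π : X → Y} (hπ : Measurable π) (ν : Measure Y) [IsProbabilityMeasure ν] (t : ℕ)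
    {S : Set (Fin (t + 1) → Y)} (hS : MeasurableSet S) :
    ∫⁻ z, ν {y | (Fin.snoc z y : Fin (t + 1) → Y) ∈ S} ∂(obsLaw P M π t) =
      ∫⁻ ω, ν {y | (Fin.snoc (fun i : Fin t => π (ω i.succ)) y : Fin (t + 1) → Y) ∈ S}
        ∂(jointLaw P M t) :=
  lintegral_map (measurable_section ν t hS) (measurable_obs hπ t)

/-- Fubini for `ν^{⊗(t+1)}`, singling out the last coordinate. -/
lemma pi_succ_apply (ν : Measure Y) [IsProbabilityMeasure ν] (t : ℕ)
    {S : Set (Fin (t + 1) → Y)} (hS : MeasurableSet S) :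
    (Measure.pi fun _ : Fin (t + 1) => ν) S =
      ∫⁻ z, ν {y | (Fin.snoc z y : Fin (t + 1) → Y) ∈ S} ∂(Measure.pi fun _ : Fin t => ν) := by
  have hmp := (measurePreserving_piFinSuccAbove (fun _ : Fin (t + 1) => ν) (Fin.last t)).symm
  rw [← hmp.measure_preimage hS.nullMeasurableSet,
    Measure.prod_apply_symm (hmp.measurable hS)]
  refine lintegral_congr fun z => ?_
  congr 1
  ext y
  simp only [Set.mem_preimage, Set.mem_ofPred_eq]
  have : (MeasurableEquiv.piFinSuccAbove (fun _ : Fin (t + 1) => Y) (Fin.last t)).symm (y, z) =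
      (Fin.snoc z y : Fin (t + 1) → Y) := by
    rw [← Fin.insertNth_last']
    rfl
  rw [this]

lemma obsLaw_zero (P : Kernel X X) [IsMarkovKernel P] (M : Measure X) [IsProbabilityMeasure M]
    {π : X → Y} (hπ : Measurable π) (ν : Measure Y) [IsProbabilityMeasure ν] :
    obsLaw P M π 0 = Measure.pi fun _ : Fin 0 => ν := by
  have : IsProbabilityMeasure (obsLaw P M π 0) :=
    Measure.isProbabilityMeasure_map (measurable_obs hπ 0).aemeasurable
  ext S _
  rcases Set.eq_empty_or_nonempty S with rfl | hS
  · simp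
  · rw [Subsingleton.eq_univ_of_nonempty hS, measure_univ, measure_univ]

lemma obsLaw_le (P : Kernel X X) [IsMarkovKernel P] (M : Measure X) [IsProbabilityMeasure M]
    {π : X → Y} (hπ : Measurable π) (ν : Measure Y) [IsProbabilityMeasure ν] {C : ℝ≥0∞}
    (hub : ∀ x : X, ∀ Γ : Set Y, MeasurableSet Γ → Measure.map π (P x) Γ ≤ C * ν Γ) (t : ℕ) :
    obsLaw P M π t ≤ C ^ t • (Measure.pi fun _ : Fin t => ν) := by
  induction t with
  | zero => simp [obsLaw_zero P M hπ ν]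
  | succ t ih =>
    refine Measure.le_iff.2 fun S hS => ?_
    have hf : Measurable fun ω : Fin (t + 1) → X =>
        ν {y | (Fin.snoc (fun i : Fin t => π (ω i.succ)) y : Fin (t + 1) → Y) ∈ S} :=
      (measurable_section ν t hS).comp (measurable_obs hπ t)
    rw [obsLaw_succ_apply P M hπ t hS]
    refine (lintegral_mono fun ω : Fin (t + 1) → X => hub _
      {y | (Fin.snoc (fun i : Fin t => π (ω i.succ)) y : Fin (t + 1) → Y) ∈ S}
      (measurable_snoc_right _ hS)).trans ?_
    rw [lintegral_const_mul _ hf, ← lintegral_obsLaw P M hπ ν t hS]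
    refine (mul_le_mul_right (lintegral_mono' ih le_rfl) C).trans_eq ?_
    rw [lintegral_smul_measure, Measure.smul_apply, pi_succ_apply ν t hS, smul_eq_mul,
      smul_eq_mul, pow_succ', mul_assoc]

lemma le_obsLaw (P : Kernel X X) [IsMarkovKernel P] (M : Measure X) [IsProbabilityMeasure M]
    {π : X → Y} (hπ : Measurable π) (ν : Measure Y) [IsProbabilityMeasure ν] {c : ℝ≥0∞}
    (hlb : ∀ x : X, ∀ Γ : Set Y, MeasurableSet Γ → c * ν Γ ≤ Measure.map π (P x) Γ) (t : ℕ) :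
    c ^ t • (Measure.pi fun _ : Fin t => ν) ≤ obsLaw P M π t := by
  induction t with
  | zero => simp [obsLaw_zero P M hπ ν]
  | succ t ih =>
    refine Measure.le_iff.2 fun S hS => ?_
    have hf : Measurable fun ω : Fin (t + 1) → X =>
        ν {y | (Fin.snoc (fun i : Fin t => π (ω i.succ)) y : Fin (t + 1) → Y) ∈ S} :=
      (measurable_section ν t hS).comp (measurable_obs hπ t)
    rw [obsLaw_succ_apply P M hπ t hS]
    refine le_trans ?_ (lintegral_mono fun ω => hlb _ _ (measurable_snoc_right _ hS))
    rw [lintegral_const_mul _ hf, ← lintegral_obsLaw P M hπ ν t hS]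
    refine le_trans (Eq.le ?_) (mul_le_mul_right (lintegral_mono' ih le_rfl) c)
    rw [lintegral_smul_measure, Measure.smul_apply, pi_succ_apply ν t hS, smul_eq_mul,
      smul_eq_mul, pow_succ', mul_assoc]

/-- A measure squeezed between `a • μ` and `b • μ` has a density with respect to `μ` that takes
values in `[a, b]` everywhere, not only almost everywhere. -/
lemma exists_density_of_squeeze {Ω : Type*} [MeasurableSpace Ω] {μ lam : Measure Ω}
    [IsProbabilityMeasure μ] {a b : ℝ} (ha : 0 ≤ a) (hab : a ≤ b)
    (hl : ENNReal.ofReal a • μ ≤ lam) (hu : lam ≤ ENNReal.ofReal b • μ) :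
    ∃ ρ : Ω → ℝ, Measurable ρ ∧ lam = μ.withDensity (fun y => ENNReal.ofReal (ρ y)) ∧
      ∀ y, a ≤ ρ y ∧ ρ y ≤ b := by
  have hfin : IsFiniteMeasure lam := by
    refine ⟨(hu Set.univ).trans_lt ?_⟩
    simp
  have hac : lam ≪ μ := Measure.absolutelyContinuous_of_le_smul hu
  have hd : μ.withDensity (lam.rnDeriv μ) = lam := Measure.withDensity_rnDeriv_eq _ _ hac
  have hm : Measurable (lam.rnDeriv μ) := Measure.measurable_rnDeriv _ _
  have hset : ∀ s, MeasurableSet s → ∫⁻ x in s, lam.rnDeriv μ x ∂μ = lam s := fun s hs => by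
    rw [← withDensity_apply _ hs, hd]
  have h1 : (fun _ => ENNReal.ofReal a) ≤ᵐ[μ] lam.rnDeriv μ := by
    refine ae_le_of_forall_setLIntegral_le_of_sigmaFinite measurable_const fun s hs _ => ?_
    rw [hset s hs, setLIntegral_const]
    exact hl s
  have h2 : lam.rnDeriv μ ≤ᵐ[μ] fun _ => ENNReal.ofReal b := by
    refine ae_le_of_forall_setLIntegral_le_of_sigmaFinite hm fun s hs _ => ?_
    rw [hset s hs, setLIntegral_const]
    exact hu s
  refine ⟨fun y => max a (min b (lam.rnDeriv μ y).toReal),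
    measurable_const.max (measurable_const.min hm.ennreal_toReal), ?_,
    fun y => ⟨le_max_left _ _, max_le hab (min_le_left _ _)⟩⟩
  rw [← hd]
  refine withDensity_congr_ae ?_
  rw [hd]
  filter_upwards [h1, h2] with y hy1 hy2
  have hne : lam.rnDeriv μ y ≠ ∞ := ne_top_of_le_ne_top ENNReal.ofReal_ne_top hy2
  have hb : (lam.rnDeriv μ y).toReal ≤ b := ENNReal.toReal_le_of_le_ofReal (ha.trans hab) hy2
  have ha' : a ≤ (lam.rnDeriv μ y).toReal := (ENNReal.ofReal_le_iff_le_toReal hne).1 hy1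
  rw [min_eq_right hb, max_eq_right ha', ENNReal.ofReal_toReal hne]

lemma abs_log_div_le {m M u v : ℝ} {n : ℕ} (hm : 0 < m) (hmM : m ≤ M)
    (hu : m ^ n ≤ u ∧ u ≤ M ^ n) (hv : m ^ n ≤ v ∧ v ≤ M ^ n) :
    |Real.log (u / v)| ≤ n * Real.log (M / m) := by
  have hmn : 0 < m ^ n := pow_pos hm n
  have hu0 := hmn.trans_le hu.1
  have hv0 := hmn.trans_le hv.1
  have e1 := Real.log_le_log hmn hu.1
  have e2 := Real.log_le_log hu0 hu.2
  have e3 := Real.log_le_log hmn hv.1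
  have e4 := Real.log_le_log hv0 hv.2
  rw [Real.log_pow] at e1 e2 e3 e4
  rw [Real.log_div hu0.ne' hv0.ne', Real.log_div (hm.trans_le hmM).ne' hm.ne', abs_le]
  constructor <;> linarith

end Aux

/-- If `m·ν ≤ π_*(P(x,·)) ≤ M·ν` for every `x`, then for every `t ≥ 1`
(written `t+1` below) the law `λ_t` admits a density `ρ_t` with respect to `ν^{⊗t}` with
`m^t ≤ ρ_t ≤ M^t` everywhere, and for any such density the entropy production
`σ_t(y₁,…,y_t) = log (ρ_t(y₁,…,y_t)/ρ_t(y_t,…,y₁))` satisfies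
`|σ_t| ≤ t · log (M/m)`. -/
theorem stmt14
    {X Y : Type*} [MeasurableSpace X] [MeasurableSpace Y]
    (P : Kernel X X) [IsMarkovKernel P]
    (M : Measure X) [IsProbabilityMeasure M]
    (hstat : M.bind (fun x => P x) = M)
    (ν : Measure Y) [IsProbabilityMeasure ν]
    (π : X → Y) (hπ : Measurable π)
    (mc Mc : ℝ) (hmc : 0 < mc) (hmM : mc ≤ Mc)
    (hlb : ∀ x : X, ∀ Γ : Set Y, MeasurableSet Γ →
      ENNReal.ofReal mc * ν Γ ≤ Measure.map π (P x) Γ)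
    (hub : ∀ x : X, ∀ Γ : Set Y, MeasurableSet Γ →
      Measure.map π (P x) Γ ≤ ENNReal.ofReal Mc * ν Γ) :
    ∀ t : ℕ,
      (∃ ρt : (Fin (t + 1) → Y) → ℝ, Measurable ρt ∧
        lamT P M π t =
          (Measure.pi fun _ : Fin (t + 1) => ν).withDensity
            (fun y => ENNReal.ofReal (ρt y)) ∧
        ∀ y, mc ^ (t + 1) ≤ ρt y ∧ ρt y ≤ Mc ^ (t + 1)) ∧
      (∀ ρt : (Fin (t + 1) → Y) → ℝ,
        lamT P M π t =
          (Measure.pi fun _ : Fin (t + 1) => ν).withDensity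
            (fun y => ENNReal.ofReal (ρt y)) →
        (∀ y, mc ^ (t + 1) ≤ ρt y ∧ ρt y ≤ Mc ^ (t + 1)) →
        ∀ y : Fin (t + 1) → Y,
          |Real.log (ρt y / ρt (fun i => y i.rev))| ≤
            (t + 1) * Real.log (Mc / mc)) := by
  intro t
  have hm0 := hmc.le
  have hM0 := hm0.trans hmM
  refine ⟨?_, fun ρ _ hρ y => ?_⟩
  · refine exists_density_of_squeeze (pow_nonneg hm0 _) (pow_le_pow_left₀ hm0 hmM _) ?_ ?_
    · rw [ENNReal.ofReal_pow hm0]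
      exact le_obsLaw P M hπ ν hlb (t + 1)
    · rw [ENNReal.ofReal_pow hM0]
      exact obsLaw_le P M hπ ν hub (t + 1)
  · exact_mod_cast abs_log_div_le hmc hmM (hρ y) (hρ fun i => y i.rev)
end
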